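/- arXiv:2005.13941 — 3 statements merged into one kernel-verified Lean document; each statement's English description precedes it below -/
import Mathlib

section
/- Let (X,d) be a metric space, let σ be a reversible conical geodesic bicombing on X, and let e : X → E be an injective hull of X. Then there exists a reversible conical geodesic bicombing σ̄ on E such that e(σ(x,y,t)) = σ̄(e(x), e(y), t) for all x, y ∈ X and t ∈ [0,1]. -/
universe u

/-- A geodesic bicombing on a metric space `X`: a map `σ : X × X × [0,1] → X` such that
`σ x y 0 = x`, `σ x y 1 = y` and `dist (σ x y s) (σ x y t) = |s - t| * dist x y`
for all `s, t ∈ [0,1]`. -/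
def IsGeodesicBicombing {X : Type*} [MetricSpace X] (σ : X → X → ℝ → X) : Prop :=
  (∀ x y : X, σ x y 0 = x) ∧ (∀ x y : X, σ x y 1 = y) ∧
    ∀ x y : X, ∀ s ∈ Set.Icc (0:ℝ) 1, ∀ t ∈ Set.Icc (0:ℝ) 1,
      dist (σ x y s) (σ x y t) = |s - t| * dist x y

/-- A bicombing is conical if
`dist (σ x y t) (σ x' y' t) ≤ (1 - t) * dist x x' + t * dist y y'` for all `t ∈ [0,1]`. -/
def IsConical {X : Type*} [MetricSpace X] (σ : X → X → ℝ → X) : Prop :=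
  ∀ x y x' y' : X, ∀ t ∈ Set.Icc (0:ℝ) 1,
    dist (σ x y t) (σ x' y' t) ≤ (1 - t) * dist x x' + t * dist y y'

/-- A bicombing is reversible if `σ x y t = σ y x (1 - t)` for all `t ∈ [0,1]`. -/
def IsReversible {X : Type*} [MetricSpace X] (σ : X → X → ℝ → X) : Prop :=
  ∀ x y : X, ∀ t ∈ Set.Icc (0:ℝ) 1, σ x y t = σ y x (1 - t)

/-- A metric space `Y` is injective if every `1`-Lipschitz map into `Y` defined on a subset
of a metric space `B` extends to a `1`-Lipschitz map on all of `B`. -/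
def IsInjectiveMetricSpace (Y : Type u) [MetricSpace Y] : Prop :=
  ∀ (B : Type u) [MetricSpace B] (A : Set B) (f : A → Y),
    LipschitzWith 1 f → ∃ g : B → Y, LipschitzWith 1 g ∧ ∀ a : A, g ↑a = f a

/-- An isometric embedding `e : X → E` into an injective metric space `E` is an injective hull
if every `1`-Lipschitz map `f : E → Z` such that `f ∘ e` is an isometric embedding is itself
an isometric embedding. -/
def IsInjectiveHull {X : Type u} {E : Type u} [MetricSpace X] [MetricSpace E] (e : X → E) :
    Prop :=
  Isometry e ∧ IsInjectiveMetricSpace E ∧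
    ∀ (Z : Type u) [MetricSpace Z] (f : E → Z),
      LipschitzWith 1 f → Isometry (f ∘ e) → Isometry f

/-!
A reversible conical bicombing `σ` induces a map `(1 - t) δ_x + t δ_y ↦ σ x y t` that is
`1`-Lipschitz for the Wasserstein distance: moving mass in a plan between two such measures until
one of its four entries vanishes makes it no more expensive, and for the resulting plans the bound
is a concatenation of a conical, a geodesic and a conical estimate. Since `E` is injective, this map
extends to a `1`-Lipschitz map on the two-point measures of `E`. Minimality of the hull forces the
extension to send every Dirac measure to its base point, so that it defines a bicombing on `E`.
-/

section Coupling

variable {ι κ μ : Type*} [Fintype ι] [Fintype κ] [Fintype μ]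
  {m : ι → ℝ} {n : κ → ℝ} {l : μ → ℝ} {π : ι → κ → ℝ} {ρ : κ → μ → ℝ}

/-- `π` is a coupling (transport plan) of the finitely supported measures with weights `m`
and `n`. -/
structure IsCoupling (m : ι → ℝ) (n : κ → ℝ) (π : ι → κ → ℝ) : Prop where
  nonneg : ∀ i j, 0 ≤ π i j
  sum_right : ∀ i, ∑ j, π i j = m i
  sum_left : ∀ j, ∑ i, π i j = n j

namespace IsCoupling

theorem symm (h : IsCoupling m n π) : IsCoupling n m (fun j i => π i j) :=
  ⟨fun j i => h.nonneg i j, h.sum_left, h.sum_right⟩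

theorem prod (hm : m ∈ stdSimplex ℝ ι) (hn : n ∈ stdSimplex ℝ κ) :
    IsCoupling m n (fun i j => m i * n j) where
  nonneg i j := mul_nonneg (hm.1 i) (hn.1 j)
  sum_right i := by rw [← Finset.mul_sum, hn.2, mul_one]
  sum_left j := by rw [← Finset.sum_mul, hm.2, one_mul]

theorem diagonal [DecidableEq ι] (hm : ∀ i, 0 ≤ m i) :
    IsCoupling m m (Matrix.diagonal m) where
  nonneg i j := by
    rw [Matrix.diagonal_apply]
    split_ifs
    exacts [hm i, le_rfl]
  sum_right i := by simp [Matrix.diagonal_apply]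
  sum_left j := by simp [Matrix.diagonal_apply]

theorem nonneg_right (h : IsCoupling m n π) (j : κ) : 0 ≤ n j :=
  h.sum_left j ▸ Finset.sum_nonneg fun i _ => h.nonneg i j

theorem eq_zero_of_right_eq_zero (h : IsCoupling m n π) {j : κ} (hj : n j = 0) (i : ι) :
    π i j = 0 :=
  (Finset.sum_eq_zero_iff_of_nonneg fun i _ => h.nonneg i j).1 ((h.sum_left j).trans hj) i
    (Finset.mem_univ i)

end IsCoupling

/-- The gluing of two plans `π` and `ρ` along their common marginal `n`: the measure on triples
under which the two outer points are independent given the middle one. -/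
noncomputable def gluing (n : κ → ℝ) (π : ι → κ → ℝ) (ρ : κ → μ → ℝ) (i : ι) (j : κ) (k : μ) : ℝ :=
  π i j * ρ j k / n j

namespace IsCoupling

theorem gluing_nonneg (hπ : IsCoupling m n π) (hρ : IsCoupling n l ρ) (i : ι) (j : κ) (k : μ) :
    0 ≤ gluing n π ρ i j k :=
  div_nonneg (mul_nonneg (hπ.nonneg i j) (hρ.nonneg j k)) (hπ.nonneg_right j)

theorem sum_gluing_right (hπ : IsCoupling m n π) (hρ : IsCoupling n l ρ) (i : ι) (j : κ) :
    ∑ k, gluing n π ρ i j k = π i j := by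
  simp only [gluing]
  rw [← Finset.sum_div, ← Finset.mul_sum, hρ.sum_right,
    mul_div_cancel_of_imp fun hj => hπ.eq_zero_of_right_eq_zero hj i]

theorem sum_gluing_left (hπ : IsCoupling m n π) (hρ : IsCoupling n l ρ) (j : κ) (k : μ) :
    ∑ i, gluing n π ρ i j k = ρ j k := by
  simp only [gluing]
  rw [← Finset.sum_div, ← Finset.sum_mul, hπ.sum_left,
    mul_div_cancel_left_of_imp fun hj => hρ.symm.eq_zero_of_right_eq_zero hj k]

theorem glue (hπ : IsCoupling m n π) (hρ : IsCoupling n l ρ) :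
    IsCoupling m l (fun i k => ∑ j, gluing n π ρ i j k) where
  nonneg i k := Finset.sum_nonneg fun j _ => hπ.gluing_nonneg hρ i j k
  sum_right i := by
    rw [Finset.sum_comm]
    simp only [hπ.sum_gluing_right hρ, hπ.sum_right]
  sum_left k := by
    rw [Finset.sum_comm]
    simp only [hπ.sum_gluing_left hρ, hρ.sum_left]

end IsCoupling

end Coupling

section Wasserstein

variable {ι κ μ E F : Type*} [Fintype ι] [Fintype κ] [Fintype μ]
  [PseudoMetricSpace E] [PseudoMetricSpace F]
  {m : ι → ℝ} {n : κ → ℝ} {l : μ → ℝ} {π : ι → κ → ℝ} {ρ : κ → μ → ℝ}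

/-- The cost of a transport plan `π` from the points `x i` to the points `y j`. -/
def transportCost (x : ι → E) (y : κ → E) (π : ι → κ → ℝ) : ℝ :=
  ∑ i, ∑ j, π i j * dist (x i) (y j)

theorem transportCost_swap (x : ι → E) (y : κ → E) (π : ι → κ → ℝ) :
    transportCost y x (fun j i => π i j) = transportCost x y π := by
  simp only [transportCost, dist_comm (y _)]
  exact Finset.sum_comm

theorem transportCost_diagonal [DecidableEq ι] (x y : ι → E) (m : ι → ℝ) :
    transportCost x y (Matrix.diagonal m) = ∑ i, m i * dist (x i) (y i) := by
  simp [transportCost, Matrix.diagonal_apply]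

theorem transportCost_comp_of_isometry {e : E → F} (he : Isometry e) (x : ι → E) (y : κ → E)
    (π : ι → κ → ℝ) : transportCost (e ∘ x) (e ∘ y) π = transportCost x y π := by
  simp only [transportCost, Function.comp_apply, he.dist_eq]

theorem IsCoupling.transportCost_nonneg (h : IsCoupling m n π) (x : ι → E) (y : κ → E) :
    0 ≤ transportCost x y π :=
  Finset.sum_nonneg fun i _ => Finset.sum_nonneg fun j _ => mul_nonneg (h.nonneg i j) dist_nonneg

theorem IsCoupling.transportCost_glue_le (hπ : IsCoupling m n π) (hρ : IsCoupling n l ρ)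
    (x : ι → E) (y : κ → E) (z : μ → E) :
    transportCost x z (fun i k => ∑ j, gluing n π ρ i j k) ≤
      transportCost x y π + transportCost y z ρ := by
  have cost_left : transportCost x y π =
      ∑ i, ∑ j, ∑ k, gluing n π ρ i j k * dist (x i) (y j) := by
    simp only [transportCost, ← Finset.sum_mul, hπ.sum_gluing_right hρ]
  have cost_right : transportCost y z ρ =
      ∑ i, ∑ j, ∑ k, gluing n π ρ i j k * dist (y j) (z k) := by
    rw [Finset.sum_comm]
    refine Finset.sum_congr rfl fun j _ => ?_
    rw [Finset.sum_comm]
    simp only [← Finset.sum_mul, hπ.sum_gluing_left hρ]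
  calc transportCost x z (fun i k => ∑ j, gluing n π ρ i j k)
      = ∑ i, ∑ j, ∑ k, gluing n π ρ i j k * dist (x i) (z k) := by
        simp only [transportCost, Finset.sum_mul]
        exact Finset.sum_congr rfl fun i _ => Finset.sum_comm
    _ ≤ ∑ i, ∑ j, ∑ k, gluing n π ρ i j k * (dist (x i) (y j) + dist (y j) (z k)) := by
        gcongr with i _ j _ k _
        exacts [hπ.gluing_nonneg hρ i j k, dist_triangle _ _ _]
    _ = transportCost x y π + transportCost y z ρ := by
        simp only [mul_add, Finset.sum_add_distrib, cost_left, cost_right]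

/-- The Wasserstein distance between `∑ i, m i • δ (x i)` and `∑ j, n j • δ (y j)`. The infimum has
the junk value `0` if the two measures have no coupling. -/
noncomputable def wassersteinDist (m : ι → ℝ) (x : ι → E) (n : κ → ℝ) (y : κ → E) : ℝ :=
  ⨅ π : {π // IsCoupling m n π}, transportCost x y π

theorem wassersteinDist_nonneg (m : ι → ℝ) (x : ι → E) (n : κ → ℝ) (y : κ → E) :
    0 ≤ wassersteinDist m x n y :=
  Real.iInf_nonneg fun π => π.2.transportCost_nonneg x y

theorem IsCoupling.wassersteinDist_le (h : IsCoupling m n π) (x : ι → E) (y : κ → E) :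
    wassersteinDist m x n y ≤ transportCost x y π :=
  ciInf_le ⟨0, Set.forall_mem_range.2 fun π : {π // IsCoupling m n π} =>
    π.2.transportCost_nonneg x y⟩ ⟨π, h⟩

theorem wassersteinDist_le_sum (hm : ∀ i, 0 ≤ m i) (x y : ι → E) :
    wassersteinDist m x m y ≤ ∑ i, m i * dist (x i) (y i) := by
  classical
  exact ((IsCoupling.diagonal hm).wassersteinDist_le x y).trans_eq (transportCost_diagonal x y m)

theorem le_wassersteinDist (hm : m ∈ stdSimplex ℝ ι) (hn : n ∈ stdSimplex ℝ κ) {x : ι → E}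
    {y : κ → E} {r : ℝ} (hr : ∀ π, IsCoupling m n π → r ≤ transportCost x y π) :
    r ≤ wassersteinDist m x n y :=
  have : Nonempty {π // IsCoupling m n π} := ⟨_, IsCoupling.prod hm hn⟩
  le_ciInf fun π => hr π π.2

theorem wassersteinDist_self (hm : ∀ i, 0 ≤ m i) (x : ι → E) : wassersteinDist m x m x = 0 :=
  ((wassersteinDist_le_sum hm x x).trans_eq (by simp)).antisymm (wassersteinDist_nonneg m x m x)

theorem wassersteinDist_comm (hm : m ∈ stdSimplex ℝ ι) (hn : n ∈ stdSimplex ℝ κ) (x : ι → E)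
    (y : κ → E) : wassersteinDist m x n y = wassersteinDist n y m x :=
  le_antisymm
    (le_wassersteinDist hn hm fun π hπ =>
      (hπ.symm.wassersteinDist_le x y).trans_eq (transportCost_swap y x π))
    (le_wassersteinDist hm hn fun π hπ =>
      (hπ.symm.wassersteinDist_le y x).trans_eq (transportCost_swap x y π))

theorem wassersteinDist_triangle (hm : m ∈ stdSimplex ℝ ι) (hn : n ∈ stdSimplex ℝ κ)
    (hl : l ∈ stdSimplex ℝ μ) (x : ι → E) (y : κ → E) (z : μ → E) :
    wassersteinDist m x l z ≤ wassersteinDist m x n y + wassersteinDist n y l z :=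
  have : Nonempty {π // IsCoupling m n π} := ⟨_, IsCoupling.prod hm hn⟩
  have : Nonempty {ρ // IsCoupling n l ρ} := ⟨_, IsCoupling.prod hn hl⟩
  le_ciInf_add_ciInf fun π ρ =>
    ((π.2.glue ρ.2).wassersteinDist_le x z).trans (π.2.transportCost_glue_le ρ.2 x y z)

theorem wassersteinDist_comp_of_isometry {e : E → F} (he : Isometry e) (m : ι → ℝ) (x : ι → E)
    (n : κ → ℝ) (y : κ → E) :
    wassersteinDist m (e ∘ x) n (e ∘ y) = wassersteinDist m x n y := by
  simp only [wassersteinDist, transportCost_comp_of_isometry he]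

end Wasserstein

/-- The probability measure `(1 - t) δ_fst + t δ_snd` on `E`, given by its data; different data may
describe the same measure, so the Wasserstein distance is only a pseudometric here. -/
structure TwoPointMeasure (E : Type*) where
  fst : E
  snd : E
  t : unitInterval

namespace TwoPointMeasure

/-- The two support points. -/
def point {E : Type*} (p : TwoPointMeasure E) : Fin 2 → E := ![p.fst, p.snd]

/-- The masses of the two support points. -/
def weight {E : Type*} (p : TwoPointMeasure E) : Fin 2 → ℝ := ![1 - p.t, p.t]

/-- The push-forward of a two-point measure. -/
def map {E F : Type*} (e : E → F) (p : TwoPointMeasure E) : TwoPointMeasure F :=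
  ⟨e p.fst, e p.snd, p.t⟩

theorem point_map {E F : Type*} (e : E → F) (p : TwoPointMeasure E) :
    (p.map e).point = e ∘ p.point := by
  ext i
  fin_cases i <;> rfl

theorem weight_mem_stdSimplex {E : Type*} (p : TwoPointMeasure E) :
    p.weight ∈ stdSimplex ℝ (Fin 2) := by
  simp [stdSimplex, weight, p.t.2.1, p.t.2.2]

variable {E F : Type*} [PseudoMetricSpace E] [PseudoMetricSpace F]

/-- Two-point measures carry the Wasserstein distance. -/
noncomputable instance : PseudoMetricSpace (TwoPointMeasure E) where
  dist p q := wassersteinDist p.weight p.point q.weight q.point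
  dist_self p := wassersteinDist_self p.weight_mem_stdSimplex.1 _
  dist_comm p q := wassersteinDist_comm p.weight_mem_stdSimplex q.weight_mem_stdSimplex _ _
  dist_triangle p q r := wassersteinDist_triangle p.weight_mem_stdSimplex q.weight_mem_stdSimplex
    r.weight_mem_stdSimplex _ _ _

theorem dist_def (p q : TwoPointMeasure E) :
    dist p q = wassersteinDist p.weight p.point q.weight q.point :=
  rfl

theorem isometry_map {e : E → F} (he : Isometry e) : Isometry (map e) :=
  Isometry.of_dist_eq fun p q => by
    rw [dist_def, dist_def, point_map, point_map]
    exact wassersteinDist_comp_of_isometry he p.weight p.point q.weight q.point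

theorem dist_mk_mk_le (x y x' y' : E) (t : unitInterval) :
    dist (mk x y t) (mk x' y' t) ≤ (1 - t) * dist x x' + t * dist y y' := by
  simpa [dist_def, point, weight] using
    wassersteinDist_le_sum (mk x y t).weight_mem_stdSimplex.1 (mk x y t).point (mk x' y' t).point

theorem dist_mk_mk_le_of_le (x y : E) {s t : unitInterval} (hst : s ≤ t) :
    dist (mk x y s) (mk x y t) ≤ (t - s) * dist x y := by
  have hst' : (s : ℝ) ≤ t := hst
  have hπ : IsCoupling (mk x y s).weight (mk x y t).weight !![1 - (t : ℝ), t - s; 0, s] := by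
    constructor <;> simp [Fin.forall_fin_two, weight, s.2.1, t.2.2, hst']
  simpa [dist_def, transportCost, point] using
    hπ.wassersteinDist_le (mk x y s).point (mk x y t).point

theorem dist_mk_mk_symm (x y : E) (t : unitInterval) :
    dist (mk x y t) (mk y x (unitInterval.symm t)) = 0 := by
  have hπ : IsCoupling (mk x y t).weight (mk y x (unitInterval.symm t)).weight
      !![0, 1 - (t : ℝ); t, 0] := by
    constructor <;> simp [Fin.forall_fin_two, weight, t.2.1, t.2.2]
  refine le_antisymm ((hπ.wassersteinDist_le _ _).trans_eq ?_) dist_nonneg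
  simp [transportCost, point]

end TwoPointMeasure

section Bicombing

variable {X : Type*} [MetricSpace X] {σ : X → X → ℝ → X}

theorem IsGeodesicBicombing.apply_self (hgeo : IsGeodesicBicombing σ) (x : X) {t : ℝ}
    (ht : t ∈ Set.Icc (0 : ℝ) 1) : σ x x t = x := by
  have h := hgeo.2.2 x x t ht 0 (by simp)
  rwa [dist_self, mul_zero, dist_eq_zero, hgeo.1] at h

theorem isGeodesicBicombing_of_dist_le (h0 : ∀ x y, σ x y 0 = x) (h1 : ∀ x y, σ x y 1 = y)
    (hle : ∀ x y, ∀ s ∈ Set.Icc (0 : ℝ) 1, ∀ t ∈ Set.Icc (0 : ℝ) 1, s ≤ t →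
      dist (σ x y s) (σ x y t) ≤ (t - s) * dist x y) :
    IsGeodesicBicombing σ := by
  refine ⟨h0, h1, fun x y s hs t ht => ?_⟩
  wlog hst : s ≤ t generalizing s t
  · rw [dist_comm, abs_sub_comm]
    exact this t ht s hs (le_of_not_ge hst)
  rw [abs_sub_comm, abs_of_nonneg (sub_nonneg.2 hst)]
  refine le_antisymm (hle x y s hs t ht hst) ?_
  have start_le := hle x y 0 (by simp) s hs hs.1
  have end_le := hle x y t ht 1 (by simp) ht.2
  rw [h0] at start_le
  rw [h1] at end_le
  linarith [dist_triangle4 x (σ x y s) (σ x y t) y]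

namespace IsConical

theorem dist_le_of_le (hcon : IsConical σ) (hgeo : IsGeodesicBicombing σ) (x y x' y' : X)
    {s t : ℝ} (hs : s ∈ Set.Icc (0 : ℝ) 1) (ht : t ∈ Set.Icc (0 : ℝ) 1) (hst : s ≤ t) :
    dist (σ x y s) (σ x' y' t) ≤ (1 - t) * dist x x' + (t - s) * dist x y' + s * dist y y' := by
  have move_end := hcon x y x y' s hs
  have move_parameter := hgeo.2.2 x y' s hs t ht
  have move_start := hcon x y' x' y' t ht
  rw [dist_self, mul_zero] at move_end move_start
  rw [abs_sub_comm, abs_of_nonneg (sub_nonneg.2 hst)] at move_parameter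
  linarith [dist_triangle4 (σ x y s) (σ x y' s) (σ x y' t) (σ x' y' t)]

theorem dist_le_plan_cost (hcon : IsConical σ) (hgeo : IsGeodesicBicombing σ)
    (hrev : IsReversible σ) (x y x' y' : X) {a b c d : ℝ} (ha : 0 ≤ a) (hb : 0 ≤ b) (hc : 0 ≤ c)
    (hd : 0 ≤ d) (hsum : a + b + c + d = 1) :
    dist (σ x y (c + d)) (σ x' y' (b + d)) ≤
      a * dist x x' + b * dist x y' + c * dist y x' + d * dist y y' := by
  wlog hparallel : dist x x' + dist y y' ≤ dist x y' + dist y x' generalizing x' y' a b c d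
  · rw [hrev x' y' (b + d) ⟨by linarith, by linarith⟩, add_comm c d,
      show 1 - (b + d) = a + c by linarith]
    linarith [this y' x' hb ha hd hc (by linarith) (le_of_not_ge hparallel)]
  wlog hcb : c ≤ b generalizing x y x' y' b c
  · have h := this x' y' x y hc hb (by linarith)
      (by simpa only [dist_comm, add_comm] using hparallel) (le_of_not_ge hcb)
    rw [dist_comm (σ x y _), dist_comm x x', dist_comm x y', dist_comm y x', dist_comm y y']
    linarith
  -- Moving the mass `c` to the diagonal lowers the cost and leaves a plan that does not use `y x'`.
  calc dist (σ x y (c + d)) (σ x' y' (b + d))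
      ≤ (1 - (b + d)) * dist x x' + (b + d - (c + d)) * dist x y' + (c + d) * dist y y' :=
        hcon.dist_le_of_le hgeo x y x' y' ⟨by linarith, by linarith⟩ ⟨by linarith, by linarith⟩
          (by linarith)
    _ = (a + c) * dist x x' + (b - c) * dist x y' + (c + d) * dist y y' := by
        rw [← hsum]
        ring
    _ ≤ a * dist x x' + b * dist x y' + c * dist y x' + d * dist y y' := by
        linarith [mul_le_mul_of_nonneg_left hparallel hc]

end IsConical

end Bicombing

namespace TwoPointMeasure

/-- The map on two-point measures induced by a bicombing, sending `(1 - t) δ_x + t δ_y` to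
`σ x y t`. -/
def barycenter {X : Type*} (σ : X → X → ℝ → X) (p : TwoPointMeasure X) : X := σ p.fst p.snd p.t

theorem lipschitzWith_barycenter {X : Type*} [MetricSpace X] {σ : X → X → ℝ → X}
    (hgeo : IsGeodesicBicombing σ) (hcon : IsConical σ) (hrev : IsReversible σ) :
    LipschitzWith 1 (barycenter σ) := by
  refine LipschitzWith.mk_one fun p q =>
    le_wassersteinDist p.weight_mem_stdSimplex q.weight_mem_stdSimplex fun π hπ => ?_
  have h_snd : π 1 0 + π 1 1 = p.t := by simpa [weight] using hπ.sum_right 1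
  have h_snd' : π 0 1 + π 1 1 = q.t := by simpa [weight] using hπ.sum_left 1
  have h_fst : π 0 0 + π 0 1 = 1 - p.t := by simpa [weight] using hπ.sum_right 0
  have h := hcon.dist_le_plan_cost hgeo hrev p.fst p.snd q.fst q.snd (hπ.nonneg 0 0)
    (hπ.nonneg 0 1) (hπ.nonneg 1 0) (hπ.nonneg 1 1) (by linarith)
  rw [h_snd, h_snd'] at h
  simpa [barycenter, transportCost, point, add_assoc] using h

/-- The bicombing `(x, y, t) ↦ β ((1 - t) δ_x + t δ_y)` induced by a map `β` on two-point measures;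
parameters outside `[0, 1]` are projected to it. -/
noncomputable def bicombing {E : Type*} (β : TwoPointMeasure E → E) (x y : E) (t : ℝ) : E :=
  β ⟨x, y, Set.projIcc 0 1 zero_le_one t⟩

theorem bicombing_of_mem {E : Type*} (β : TwoPointMeasure E → E) (x y : E) {t : ℝ}
    (ht : t ∈ Set.Icc (0 : ℝ) 1) : bicombing β x y t = β ⟨x, y, ⟨t, ht⟩⟩ := by
  rw [bicombing, Set.projIcc_of_mem _ ht]

variable {E : Type*} [MetricSpace E] {β : TwoPointMeasure E → E}

theorem isConical_bicombing (hβ : LipschitzWith 1 β) : IsConical (bicombing β) :=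
  fun x y x' y' t ht => by
    rw [bicombing_of_mem β x y ht, bicombing_of_mem β x' y' ht]
    simpa using hβ.dist_le_mul_of_le (dist_mk_mk_le x y x' y' ⟨t, ht⟩)

theorem isReversible_bicombing (hβ : LipschitzWith 1 β) : IsReversible (bicombing β) :=
  fun x y t ht => by
    rw [bicombing_of_mem β x y ht, bicombing_of_mem β y x (Set.Icc.one_sub_mem ht)]
    exact ((Metric.inseparable_iff.2 (dist_mk_mk_symm x y ⟨t, ht⟩)).map hβ.continuous).eq

theorem isGeodesicBicombing_bicombing (hβ : LipschitzWith 1 β) (hdirac : ∀ z t, β ⟨z, z, t⟩ = z) :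
    IsGeodesicBicombing (bicombing β) := by
  have hcon := isConical_bicombing hβ
  have apply_self (z : E) (t : ℝ) : bicombing β z z t = z := hdirac z _
  refine isGeodesicBicombing_of_dist_le (fun x y => ?_) (fun x y => ?_) fun x y s hs t ht hst => ?_
  · simpa [apply_self] using hcon x y x x 0 (by simp)
  · simpa [apply_self] using hcon x y y y 1 (by simp)
  · rw [bicombing_of_mem β x y hs, bicombing_of_mem β x y ht]
    simpa using hβ.dist_le_mul_of_le
      (dist_mk_mk_le_of_le x y (s := ⟨s, hs⟩) (t := ⟨t, ht⟩) hst)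

end TwoPointMeasure

theorem IsInjectiveMetricSpace.exists_lipschitzWith_extension {E P : Type u} [MetricSpace E]
    [PseudoMetricSpace P] (hE : IsInjectiveMetricSpace E) {ι : Type*} (i : ι → P) (f : ι → E)
    (hf : ∀ a b, dist (f a) (f b) ≤ dist (i a) (i b)) :
    ∃ g : P → E, LipschitzWith 1 g ∧ ∀ a, g (i a) = f a := by
  let j : ι → SeparationQuotient P := SeparationQuotient.mk ∘ i
  have hfj (a b : ι) : dist (f a) (f b) ≤ dist (j a) (j b) :=
    (hf a b).trans_eq (SeparationQuotient.dist_mk _ _).symm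
  obtain ⟨g, hg, hgf⟩ := hE (SeparationQuotient P) (Set.range j) (f ∘ Set.rangeSplitting j) <|
    LipschitzWith.mk_one fun a b => by
      simpa only [Set.apply_rangeSplitting, Function.comp_apply, Subtype.dist_eq] using
        hfj (Set.rangeSplitting j a) (Set.rangeSplitting j b)
  refine ⟨g ∘ SeparationQuotient.mk, LipschitzWith.mk_one fun p q => ?_, fun a => ?_⟩
  · simpa [SeparationQuotient.dist_mk] using
      hg.dist_le_mul (SeparationQuotient.mk p) (SeparationQuotient.mk q)
  · have hsplit := hfj (Set.rangeSplitting j ⟨j a, Set.mem_range_self a⟩) a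
    rw [Set.apply_rangeSplitting j, dist_self] at hsplit
    exact (hgf ⟨j a, Set.mem_range_self a⟩).trans (dist_le_zero.1 hsplit)

namespace IsInjectiveHull

variable {X E : Type u} [MetricSpace X] [MetricSpace E] {e : X → E} {φ : E → E}

theorem isometry_of_fixes (he : IsInjectiveHull e) (hφ : LipschitzWith 1 φ)
    (hfix : ∀ x, φ (e x) = e x) : Isometry φ :=
  he.2.2 E φ hφ (by rw [show φ ∘ e = e from funext hfix]; exact he.1)

-- As `z` and `φ z` have the same distances to `e X`, a `1`-Lipschitz map fixing `e X` can identify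
-- them; such a map is injective.
theorem apply_eq_of_fixes (he : IsInjectiveHull e) (hφ : LipschitzWith 1 φ)
    (hfix : ∀ x, φ (e x) = e x) (z : E) : φ z = z := by
  have hdist (x : X) : dist (φ z) (e x) = dist z (e x) := by
    simpa only [hfix] using (he.isometry_of_fixes hφ hfix).dist_eq z (e x)
  obtain ⟨g, hg, hgi⟩ := he.2.1.exists_lipschitzWith_extension
    (Sum.elim e ![φ z, z]) (Sum.elim e fun _ => z) <| by
      rintro (x | a) (y | b)
      · simp
      · fin_cases b <;> simp [dist_comm (e x), hdist]
      · fin_cases a <;> simp [hdist]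
      · simp
  exact (he.isometry_of_fixes hg fun x => hgi (Sum.inl x)).injective
    ((hgi (Sum.inr 0)).trans (hgi (Sum.inr 1)).symm)

theorem apply_dirac (he : IsInjectiveHull e) {β : TwoPointMeasure E → E} (hβ : LipschitzWith 1 β)
    (hfix : ∀ x t, β ⟨e x, e x, t⟩ = e x) (z : E) (t : unitInterval) : β ⟨z, z, t⟩ = z := by
  have hdirac : LipschitzWith 1 fun z => β ⟨z, z, t⟩ := LipschitzWith.mk_one fun z w => by
    have h := hβ.dist_le_mul_of_le (TwoPointMeasure.dist_mk_mk_le z z w w t)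
    rwa [NNReal.coe_one, one_mul, ← add_mul, sub_add_cancel, one_mul] at h
  exact he.apply_eq_of_fixes hdirac (fun x => hfix x t) z

end IsInjectiveHull

/-- **Extension of reversible conical bicombings to the injective hull.**
If `σ` is a reversible conical geodesic bicombing on `X` and `e : X → E` is an injective hull
of `X`, then there is a reversible conical geodesic bicombing `σ'` on `E` with
`e (σ x y t) = σ' (e x) (e y) t` for all `x, y ∈ X` and `t ∈ [0,1]`. -/
theorem reversible_conical_bicombing_extends_to_injective_hull
    {X E : Type u} [MetricSpace X] [MetricSpace E] (e : X → E) (he : IsInjectiveHull e)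
    (σ : X → X → ℝ → X) (hgeo : IsGeodesicBicombing σ) (hcon : IsConical σ)
    (hrev : IsReversible σ) :
    ∃ σ' : E → E → ℝ → E, IsGeodesicBicombing σ' ∧ IsConical σ' ∧ IsReversible σ' ∧
      ∀ x y : X, ∀ t ∈ Set.Icc (0:ℝ) 1, e (σ x y t) = σ' (e x) (e y) t := by
  obtain ⟨β, hβ, hβe⟩ := he.2.1.exists_lipschitzWith_extension (TwoPointMeasure.map e)
    (e ∘ TwoPointMeasure.barycenter σ) fun p q => by
      have h := (TwoPointMeasure.lipschitzWith_barycenter hgeo hcon hrev).dist_le_mul p q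
      rwa [NNReal.coe_one, one_mul, ← he.1.dist_eq,
        ← (TwoPointMeasure.isometry_map he.1).dist_eq] at h
  have hext (x y : X) (t : unitInterval) : β ⟨e x, e y, t⟩ = e (σ x y t) := hβe ⟨x, y, t⟩
  have hdirac : ∀ z t, β ⟨z, z, t⟩ = z :=
    he.apply_dirac hβ fun x t => by rw [hext, hgeo.apply_self x t.2]
  refine ⟨TwoPointMeasure.bicombing β, TwoPointMeasure.isGeodesicBicombing_bicombing hβ hdirac,
    TwoPointMeasure.isConical_bicombing hβ, TwoPointMeasure.isReversible_bicombing hβ,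
    fun x y t ht => ?_⟩
  rw [TwoPointMeasure.bicombing_of_mem β _ _ ht, hext]
end

section
/- Let (X,d) be a complete metric space. Then X admits a conical geodesic bicombing if and only if X admits a contracting barycenter map β : P₁(X) → X. -/
open scoped ENNReal

/-- The first Wasserstein distance between two (probability) measures: the infimum of
`∫ d(x,y) dγ` over all couplings `γ` of the pair, i.e. probability measures on `X × X`
with first marginal `μ` and second marginal `ν`. -/
noncomputable def W1 {X : Type*} [MetricSpace X] [MeasurableSpace X]
    (μ ν : MeasureTheory.Measure X) : ℝ≥0∞ :=
  ⨅ (γ : MeasureTheory.Measure (X × X)) (_ : MeasureTheory.IsProbabilityMeasure γ ∧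
      γ.map Prod.fst = μ ∧ γ.map Prod.snd = ν),
    ∫⁻ p, edist p.1 p.2 ∂γ

/-- Membership in `P₁(X)`: a Radon probability measure with finite first moment. -/
def MemP1 {X : Type*} [MetricSpace X] [MeasurableSpace X]
    (μ : MeasureTheory.Measure X) : Prop :=
  MeasureTheory.IsProbabilityMeasure μ ∧ μ.InnerRegular ∧
    ∀ x₀ : X, (∫⁻ x, edist x x₀ ∂μ) ≠ ⊤

/-- `P₁(X)`: the space of Radon probability measures on `X` with finite first moment. -/
abbrev P1 (X : Type*) [MetricSpace X] [MeasurableSpace X] : Type _ :=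
  {μ : MeasureTheory.Measure X // MemP1 μ}

/-- A contracting barycenter map: a `1`-Lipschitz map `β : P₁(X) → X` (with respect to the
first Wasserstein distance) such that `β δ_x = x` for every `x`. -/
def IsContractingBarycenter {X : Type*} [MetricSpace X] [MeasurableSpace X]
    (β : P1 X → X) : Prop :=
  (∀ μ ν : P1 X, edist (β μ) (β ν) ≤ W1 μ.1 ν.1) ∧
    ∀ (x : X) (μ : P1 X), μ.1 = MeasureTheory.Measure.dirac x → β μ = x

/-!
For the implication from bicombings to barycenters, the midpoint map `m x y = σ x y (1/2)` yields
symmetric means `b n` of `n` points, by recursion on `n`: replacing each of the `n + 1` points by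
the mean of the other `n` points does not increase `ℓ¹`-distances and shrinks mutual distances by
a definite factor, so the iterates of this step converge to a constant tuple, whose value is the
mean of the original `n + 1` points. By construction this mean does not change under the step.

Let `X₁, X₂, …` be independent samples of `μ`. The invariance makes `E d(b n (X₁, …, Xₙ), z)`
decrease in `n` for every `z`. If `μ` has finite support, then two independent samples of size `n`
agree up to a permutation and about `√n` entries, so the sample means concentrate; the general case
follows by approximation. Hence `z ↦ lim E d(b n (X₁, …, Xₙ), z)` has infimum zero, and by
completeness it vanishes at exactly one point, the barycenter of `μ`. Contraction follows by
sampling from a coupling.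

Conversely, `σ x y t` is the barycenter of `(1 - t) δ_x + t δ_y`.
-/

/-! ### Symmetric contracting means and their recursive construction -/

section Reshuffling

open Filter Topology

variable {X ι : Type*} [PseudoMetricSpace X] [Fintype ι]

/-- A symmetric mean of the points of a finite family, contracting for the normalized
`ℓ¹`-distance `(1 / card ι) * ∑ i, dist (x i) (y i)`. It is the restriction of a contracting
barycenter map to uniform measures on `ι`-indexed families. -/
structure IsContractingMean (b : (ι → X) → X) : Prop where
  const (a : X) : b (fun _ => a) = a
  comp_perm (e : Equiv.Perm ι) (x : ι → X) : b (x ∘ e) = b x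
  card_mul_dist_le (x y : ι → X) : Fintype.card ι * dist (b x) (b y) ≤ ∑ i, dist (x i) (y i)

/-- A permutation equivariant map of families which fixes constant families, does not increase the
`ℓ¹`-distance and halves mutual distances. The iterates of such a map converge to constant
families, whose values are a contracting mean. -/
structure IsReshuffling (R : (ι → X) → ι → X) : Prop where
  const (a : X) : R (fun _ => a) = fun _ => a
  comp_perm (e : Equiv.Perm ι) (x : ι → X) : R (x ∘ e) = R x ∘ e
  sum_dist_le (x y : ι → X) : ∑ i, dist (R x i) (R y i) ≤ ∑ i, dist (x i) (y i)
  dist_le_half (x : ι → X) (i j : ι) : dist (R x i) (R x j) ≤ dist (x i) (x j) / 2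

namespace IsReshuffling

variable {R : (ι → X) → ι → X}

lemma iterate_const (hR : IsReshuffling R) (a : X) (k : ℕ) :
    R^[k] (fun _ => a) = fun _ => a :=
  Function.iterate_fixed (hR.const a) k

lemma iterate_comp_perm (hR : IsReshuffling R) (e : Equiv.Perm ι) (x : ι → X) (k : ℕ) :
    R^[k] (x ∘ e) = R^[k] x ∘ e :=
  (Function.Semiconj.iterate_right (f := (· ∘ e)) (fun x => (hR.comp_perm e x).symm) k x).symm

lemma sum_dist_iterate_le (hR : IsReshuffling R) (x y : ι → X) (k : ℕ) :
    ∑ i, dist (R^[k] x i) (R^[k] y i) ≤ ∑ i, dist (x i) (y i) := by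
  induction k with
  | zero => rfl
  | succ k ih =>
    simp only [Function.iterate_succ_apply']
    exact (hR.sum_dist_le _ _).trans ih

lemma dist_iterate_le (hR : IsReshuffling R) (x : ι → X) (k : ℕ) (i j : ι) :
    dist (R^[k] x i) (R^[k] x j) ≤ dist (x i) (x j) / 2 ^ k := by
  induction k with
  | zero => simp
  | succ k ih =>
    rw [Function.iterate_succ_apply', pow_succ, ← div_div]
    exact (hR.dist_le_half _ i j).trans (by gcongr)

lemma dist_apply_le (hR : IsReshuffling R) (x : ι → X) (i : ι) :
    dist (R x i) (x i) ≤ ∑ j, dist (x j) (x i) := by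
  have h := hR.sum_dist_le x fun _ => x i
  rw [hR.const] at h
  exact (Finset.single_le_sum (f := fun j => dist (R x j) (x i)) (fun _ _ => dist_nonneg)
    (Finset.mem_univ i)).trans h

lemma exists_tendsto_iterate [CompleteSpace X] [Nonempty ι] (hR : IsReshuffling R) (x : ι → X) :
    ∃ c, ∀ i, Tendsto (fun k => R^[k] x i) atTop (𝓝 c) := by
  let i₀ := Classical.arbitrary ι
  have hstep (k : ℕ) : dist (R^[k] x i₀) (R^[k + 1] x i₀) ≤
      (2 * ∑ j, dist (x j) (x i₀)) / 2 / 2 ^ k := by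
    rw [dist_comm, Function.iterate_succ_apply', mul_div_cancel_left₀ _ two_ne_zero,
      Finset.sum_div]
    exact (hR.dist_apply_le _ _).trans (Finset.sum_le_sum fun j _ => hR.dist_iterate_le x k j i₀)
  obtain ⟨c, hc⟩ := cauchySeq_tendsto_of_complete (cauchySeq_of_le_geometric_two hstep)
  refine ⟨c, fun i => hc.congr_dist ?_⟩
  exact squeeze_zero (fun _ => dist_nonneg) (fun k => hR.dist_iterate_le x k i₀ i)
    (tendsto_const_nhds.div_atTop (tendsto_pow_atTop_atTop_of_one_lt one_lt_two))

lemma exists_isContractingMean {X : Type*} [MetricSpace X] [CompleteSpace X] [Nonempty ι]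
    {R : (ι → X) → ι → X} (hR : IsReshuffling R) :
    ∃ b : (ι → X) → X, IsContractingMean b ∧ ∀ x, b (R x) = b x := by
  choose b hb using hR.exists_tendsto_iterate
  let i₀ := Classical.arbitrary ι
  refine ⟨b, ⟨fun a => ?_, fun e x => ?_, fun x y => ?_⟩, fun x => ?_⟩
  · refine tendsto_nhds_unique (hb _ i₀) ?_
    simp only [hR.iterate_const, tendsto_const_nhds]
  · refine tendsto_nhds_unique (hb _ i₀) ?_
    simpa only [hR.iterate_comp_perm, Function.comp_apply] using hb x (e i₀)
  · have hlim := tendsto_finsetSum Finset.univ fun i _ => (hb x i).dist (hb y i)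
    rw [Finset.sum_const, nsmul_eq_mul, Finset.card_univ] at hlim
    exact le_of_tendsto' hlim (hR.sum_dist_iterate_le x y)
  · refine tendsto_nhds_unique (hb _ i₀) ?_
    simpa only [Function.iterate_succ_apply] using (tendsto_add_atTop_iff_nat 1).2 (hb x i₀)

end IsReshuffling

lemma isReshuffling_midpoint {m : X → X → X} (hself : ∀ a, m a a = a)
    (hm : ∀ x y x' y', dist (m x y) (m x' y') ≤ (dist x x' + dist y y') / 2) :
    IsReshuffling fun (x : Fin 2 → X) i => m (x i) (x i.rev) where
  const a := funext fun _ => hself a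
  comp_perm e x := by
    have hrev : ∀ (e : Equiv.Perm (Fin 2)) i, e i.rev = (e i).rev := by decide
    simp only [Function.comp_def, hrev]
  sum_dist_le x y := by
    have h₀ := hm (x 0) (x 1) (y 0) (y 1)
    have h₁ := hm (x 1) (x 0) (y 1) (y 0)
    rw [Fin.sum_univ_two, Fin.sum_univ_two]
    exact (add_le_add h₀ h₁).trans_eq (by ring)
  dist_le_half x i j := by
    have key (a c : X) : dist (m a c) (m c a) ≤ dist a c / 2 := by
      have ha := hm a a c a
      have hc := hm c c c a
      have h := hm a c (m c a) (m c a)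
      simp only [hself, dist_self] at ha hc h
      rw [dist_comm c a] at hc
      linarith
    rcases eq_or_ne i j with rfl | hij
    · simp
    · obtain rfl : j = i.rev := (by decide : ∀ i j : Fin 2, i ≠ j → j = i.rev) i j hij
      simpa using key _ _

end Reshuffling

section Deletion

variable {X : Type*} {n : ℕ}

lemma exists_removeNth_comp_perm (e : Equiv.Perm (Fin (n + 1))) (i : Fin (n + 1)) :
    ∃ e' : Equiv.Perm (Fin n), ∀ x : Fin (n + 1) → X,
      i.removeNth (x ∘ e) = (e i).removeNth x ∘ e' := by
  let e₀ : {j // j ≠ i} ≃ {j // j ≠ e i} := e.subtypeEquiv (by simp)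
  refine ⟨((finSuccAboveEquiv i).trans e₀).trans (finSuccAboveEquiv (e i)).symm,
    fun x => funext fun k => congrArg x ?_⟩
  exact congrArg Subtype.val
    ((finSuccAboveEquiv (e i)).apply_symm_apply (e₀ (finSuccAboveEquiv i k))).symm

variable [PseudoMetricSpace X]

lemma sum_sum_dist_removeNth (x y : Fin (n + 1) → X) :
    ∑ i : Fin (n + 1), ∑ k, dist (i.removeNth x k) (i.removeNth y k) =
      n * ∑ i, dist (x i) (y i) := by
  have h (i : Fin (n + 1)) : ∑ k, dist (i.removeNth x k) (i.removeNth y k) =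
      ∑ j, dist (x j) (y j) - dist (x i) (y i) :=
    eq_sub_of_add_eq' (Fin.sum_univ_succAbove (fun j => dist (x j) (y j)) i).symm
  simp only [h, Finset.sum_sub_distrib, Finset.sum_const, Finset.card_univ, Fintype.card_fin,
    nsmul_eq_mul]
  push_cast
  ring

lemma sum_dist_comp_swap {ι : Type*} [Fintype ι] [DecidableEq ι] (x : ι → X) (i j : ι) :
    ∑ k, dist (x k) (x (Equiv.swap i j k)) = 2 * dist (x i) (x j) := by
  rcases eq_or_ne i j with rfl | hij
  · simp
  rw [Finset.sum_eq_add i j hij (fun k _ hk => by simp [Equiv.swap_apply_of_ne_of_ne hk.1 hk.2])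
    (by simp) (by simp), Equiv.swap_apply_left, Equiv.swap_apply_right, dist_comm (x j), two_mul]

lemma sum_dist_removeNth_comp_swap (x : Fin (n + 1) → X) (i j : Fin (n + 1)) :
    ∑ k, dist (i.removeNth x k) (i.removeNth (x ∘ Equiv.swap i j) k) = dist (x i) (x j) := by
  have h := sum_dist_comp_swap x i j
  rw [Fin.sum_univ_succAbove _ i, Equiv.swap_apply_left, two_mul] at h
  exact add_left_cancel h

variable {b : (Fin n → X) → X}

lemma IsContractingMean.apply_removeNth_comp_perm (hb : IsContractingMean b)
    (e : Equiv.Perm (Fin (n + 1))) (x : Fin (n + 1) → X) (i : Fin (n + 1)) :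
    b (i.removeNth (x ∘ e)) = b ((e i).removeNth x) := by
  obtain ⟨e', he'⟩ := exists_removeNth_comp_perm (X := X) e i
  rw [he', hb.comp_perm]

lemma IsContractingMean.isReshuffling_removeNth (hb : IsContractingMean b) (hn : 2 ≤ n) :
    IsReshuffling fun (x : Fin (n + 1) → X) i => b (i.removeNth x) := by
  have hlip (x y : Fin n → X) : n * dist (b x) (b y) ≤ ∑ k, dist (x k) (y k) := by
    simpa using hb.card_mul_dist_le x y
  have hn₂ : (2 : ℝ) ≤ n := by exact_mod_cast hn
  refine ⟨fun a => funext fun _ => hb.const a,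
    fun e x => funext fun i => hb.apply_removeNth_comp_perm e x i, fun x y => ?_, fun x i j => ?_⟩
  · refine le_of_mul_le_mul_left ?_ (two_pos.trans_le hn₂)
    rw [Finset.mul_sum, ← sum_sum_dist_removeNth]
    exact Finset.sum_le_sum fun i _ => hlip _ _
  · -- Up to a permutation, deleting `x j` instead of `x i` changes a single entry.
    have h := hlip (i.removeNth x) (i.removeNth (x ∘ Equiv.swap i j))
    rw [hb.apply_removeNth_comp_perm, Equiv.swap_apply_left, sum_dist_removeNth_comp_swap] at h
    rw [le_div_iff₀' two_pos]
    exact (mul_le_mul_of_nonneg_right hn₂ dist_nonneg).trans h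

end Deletion

section MeanSequence

variable {X : Type*} [PseudoMetricSpace X]

/-- A sequence of contracting means, `b n` being a mean of `n + 2` points, such that the mean of
`n + 3` points is the mean of the means of the `n + 2`-point subfamilies. -/
structure IsMeanSequence (b : ∀ n, (Fin (n + 2) → X) → X) : Prop where
  isContractingMean (n : ℕ) : IsContractingMean (b n)
  apply_removeNth (n : ℕ) (x : Fin (n + 3) → X) :
    b (n + 1) (fun i => b n (i.removeNth x)) = b (n + 1) x

lemma exists_isMeanSequence {X : Type*} [MetricSpace X] [CompleteSpace X] {m : X → X → X}
    (hself : ∀ a, m a a = a)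
    (hm : ∀ x y x' y', dist (m x y) (m x' y') ≤ (dist x x' + dist y y') / 2) :
    ∃ b : ∀ n, (Fin (n + 2) → X) → X, IsMeanSequence b := by
  obtain ⟨b₀, hb₀, -⟩ := (isReshuffling_midpoint hself hm).exists_isContractingMean
  choose next hnext hfix using fun n (b : (Fin (n + 2) → X) → X) (hb : IsContractingMean b) =>
    (hb.isReshuffling_removeNth (Nat.le_add_left 2 n)).exists_isContractingMean
  let B : ∀ n, {b : (Fin (n + 2) → X) → X // IsContractingMean b} :=
    fun n => n.rec ⟨b₀, hb₀⟩ fun n b => ⟨next n b.1 b.2, hnext n b.1 b.2⟩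
  exact ⟨fun n => (B n).1, fun n => (B n).2, fun n => hfix n (B n).1 (B n).2⟩

variable {ι : Type*} [Fintype ι] {b : (ι → X) → X}

lemma IsContractingMean.card_mul_edist_le (hb : IsContractingMean b) (x y : ι → X) :
    Fintype.card ι * edist (b x) (b y) ≤ ∑ i, edist (x i) (y i) := by
  simp only [edist_dist, ← ENNReal.ofReal_sum_of_nonneg fun _ _ => dist_nonneg,
    ← ENNReal.ofReal_natCast, ← ENNReal.ofReal_mul (Nat.cast_nonneg _)]
  exact ENNReal.ofReal_le_ofReal (hb.card_mul_dist_le x y)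

lemma IsContractingMean.lipschitzWith [Nonempty ι] (hb : IsContractingMean b) :
    LipschitzWith 1 b := by
  refine LipschitzWith.mk_one fun x y => ?_
  refine le_of_mul_le_mul_left ((hb.card_mul_dist_le x y).trans ?_)
    (Nat.cast_pos.2 Fintype.card_pos)
  rw [← nsmul_eq_mul, ← Finset.card_univ]
  exact Finset.sum_le_card_nsmul _ _ _ fun i _ => dist_le_pi_dist x y i

variable {b : ∀ n, (Fin (n + 2) → X) → X}

lemma IsMeanSequence.card_mul_edist_succ_le (hb : IsMeanSequence b) (n : ℕ)
    (x : Fin (n + 3) → X) (z : X) :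
    (n + 3 : ℕ) * edist (b (n + 1) x) z ≤ ∑ i : Fin (n + 3), edist (b n (i.removeNth x)) z := by
  have h := (hb.isContractingMean (n + 1)).card_mul_edist_le
    (fun i => b n (i.removeNth x)) fun _ => z
  rwa [hb.apply_removeNth, (hb.isContractingMean _).const, Fintype.card_fin] at h

end MeanSequence

section Matching

open Finset

variable {ι α : Type*}

lemma card_swap_ne_lt [Fintype ι] [DecidableEq ι] [DecidableEq α] {w v : ι → α} {i j : ι}
    (hi : w i ≠ v i) (hj : w j ≠ v j) (hij : w j = v i) :
    #{k | w (Equiv.swap i j k) ≠ v k} < #{k | w k ≠ v k} := by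
  refine card_lt_card (ssubset_iff_of_subset (fun k hk => ?_) |>.2 ⟨i, by simpa, by simpa⟩)
  rcases eq_or_ne k i with rfl | hki
  · simpa
  rcases eq_or_ne k j with rfl | hkj
  · simpa
  simpa [Equiv.swap_apply_of_ne_of_ne hki hkj] using hk

lemma exists_perm_fiber_subset [Finite ι] (u v : ι → α) : ∃ e : Equiv.Perm ι, ∀ a,
    (∀ i, v i = a → u (e i) = a) ∨ ∀ i, u (e i) = a → v i = a := by
  classical
  have := Fintype.ofFinite ι
  obtain ⟨e, he⟩ := Finite.exists_min fun e : Equiv.Perm ι => #{i | u (e i) ≠ v i}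
  refine ⟨e, fun a => ?_⟩
  by_contra! ⟨⟨i, hvi, hui⟩, j, huj, hvj⟩
  exact (he ((Equiv.swap i j).trans e)).not_gt <| card_swap_ne_lt (w := u ∘ e)
    (hvi.symm ▸ hui) (by simpa [huj] using hvj.symm) (huj.trans hvi.symm)

lemma exists_perm_card_ne_le [Fintype ι] [DecidableEq α] (u v : ι → α) {A : Finset α}
    (hv : ∀ i, v i ∈ A) :
    ∃ e : Equiv.Perm ι, (#{i | u (e i) ≠ v i} : ℝ) ≤
      ∑ a ∈ A, |(#{i | u i = a} - #{i | v i = a} : ℝ)| := by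
  classical
  obtain ⟨e, he⟩ := exists_perm_fiber_subset u v
  refine ⟨e, ?_⟩
  rw [card_eq_sum_card_fiberwise (f := v) (t := A) fun i _ => hv i, Nat.cast_sum]
  refine sum_le_sum fun a _ => ?_
  have hcard : #{i | u (e i) = a} = #{i | u i = a} := card_equiv e (by simp)
  rw [← hcard, filter_filter]
  rcases he a with h | h
  · have hempty : ({i | u (e i) ≠ v i ∧ v i = a} : Finset ι) = ∅ :=
      filter_eq_empty_iff.2 fun i _ ⟨hne, hi⟩ => hne ((h i hi).trans hi.symm)
    simp [hempty]
  · have hsub : ({i | u (e i) = a} : Finset ι) ⊆ ({i | v i = a} : Finset ι) :=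
      monotone_filter_right _ fun i _ => h i
    rw [abs_sub_comm, ← Nat.cast_sub (card_le_card hsub), ← card_sdiff_of_subset hsub, Nat.abs_cast,
      Nat.cast_le]
    exact card_le_card fun i => by simp +contextual [eq_comm]

end Matching

section MeanComparison

open Finset

variable {X ι : Type*} [PseudoMetricSpace X] [Fintype ι] {b : (ι → X) → X}

open Classical in
lemma IsContractingMean.card_mul_dist_le_sum_abs (hb : IsContractingMean b) {u v : ι → X}
    {A : Finset X} {D : ℝ} (hu : ∀ i, u i ∈ A) (hv : ∀ i, v i ∈ A)
    (hD : ∀ a ∈ A, ∀ a' ∈ A, dist a a' ≤ D) :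
    Fintype.card ι * dist (b u) (b v) ≤
      (∑ a ∈ A, |(#{i | u i = a} - #{i | v i = a} : ℝ)|) * D := by
  rcases isEmpty_or_nonempty ι with _ | ⟨⟨i₀⟩⟩
  · simp
  have hD0 : 0 ≤ D := dist_nonneg.trans (hD _ (hu i₀) _ (hu i₀))
  obtain ⟨e, he⟩ := exists_perm_card_ne_le u v hv
  calc Fintype.card ι * dist (b u) (b v)
    _ = Fintype.card ι * dist (b (u ∘ e)) (b v) := by rw [hb.comp_perm]
    _ ≤ ∑ i, dist (u (e i)) (v i) := hb.card_mul_dist_le _ _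
    _ ≤ ∑ i, if u (e i) ≠ v i then D else 0 := by
      refine sum_le_sum fun i _ => ?_
      split_ifs with h
      · exact hD _ (hu _) _ (hv _)
      · simp [not_not.1 h]
    _ = #{i | u (e i) ≠ v i} * D := by rw [← sum_filter, sum_const, nsmul_eq_mul]
    _ ≤ _ := by gcongr

end MeanComparison

/-! ### Measurability and approximation -/

section Measurability

open Filter Topology MeasureTheory

section Pi

variable {Ω ι : Type*} {mΩ : MeasurableSpace Ω} [Finite ι] {Y : ι → Type*}
  [∀ i, TopologicalSpace (Y i)] {f : Ω → ∀ i, Y i}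

lemma stronglyMeasurable_of_forall_apply (hf : ∀ i, StronglyMeasurable fun ω => f ω i) :
    StronglyMeasurable f := by
  have := Fintype.ofFinite ι
  refine ⟨fun k => ⟨fun ω i => (hf i).approx k ω, fun y => ?_, ?_⟩,
    fun ω => tendsto_pi_nhds.2 fun i => (hf i).tendsto_approx ω⟩
  · have hfiber : (fun ω i => (hf i).approx k ω) ⁻¹' {y} = ⋂ i, (hf i).approx k ⁻¹' {y i} := by
      ext ω
      simp [funext_iff]
    rw [hfiber]
    exact .iInter fun i => SimpleFunc.measurableSet_preimage _ _
  · refine (Set.Finite.pi' fun i => ((hf i).approx k).finite_range).subset ?_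
    rintro _ ⟨ω, rfl⟩ i
    exact Set.mem_range_self ω

lemma aestronglyMeasurable_of_forall_apply {P : Measure Ω}
    (hf : ∀ i, AEStronglyMeasurable (fun ω => f ω i) P) : AEStronglyMeasurable f P :=
  ⟨fun ω i => (hf i).mk _ ω,
    stronglyMeasurable_of_forall_apply fun i => (hf i).stronglyMeasurable_mk,
    (ae_all_iff.2 fun i => (hf i).ae_eq_mk).mono fun _ h => funext h⟩

end Pi

lemma aestronglyMeasurable_id_of_innerRegular {X : Type*} [TopologicalSpace X]
    [TopologicalSpace.PseudoMetrizableSpace X] [T2Space X] [MeasurableSpace X] [BorelSpace X]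
    (μ : Measure X) [IsFiniteMeasure μ] [μ.InnerRegular] :
    AEStronglyMeasurable id μ := by
  have htight : IsTightMeasureSet {μ} := isTightMeasureSet_singleton_of_innerRegular
  rw [isTightMeasureSet_iff_exists_isCompact_measure_compl_le] at htight
  choose K hK hμK using fun n : ℕ => htight (n : ℝ≥0∞)⁻¹ (by simp)
  refine aestronglyMeasurable_iff_aemeasurable_separable.2 ⟨aemeasurable_id, ⋃ n, K n,
    .iUnion fun n => (hK n).isSeparable, ?_⟩
  have hnull : μ (⋃ n, K n)ᶜ = 0 := by
    refine le_bot_iff.1 (ge_of_tendsto' ENNReal.tendsto_inv_nat_nhds_zero fun n => ?_)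
    exact (measure_mono (Set.compl_subset_compl.2 (Set.subset_iUnion K n))).trans (hμK n μ rfl)
  exact measure_eq_zero_iff_ae_notMem.1 hnull |>.mono fun x hx => not_not.1 hx

lemma lintegral_comp_measurePreserving {Ω Ω' : Type*} {mΩ : MeasurableSpace Ω}
    {mΩ' : MeasurableSpace Ω'} {P : Measure Ω} {Q : Measure Ω'} {φ : Ω' → Ω}
    (hφ : MeasurePreserving φ Q P) {F : Ω → ℝ≥0∞} (hF : AEMeasurable F P) :
    ∫⁻ ω, F (φ ω) ∂Q = ∫⁻ ω, F ω ∂P := by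
  rw [← hφ.map_eq, lintegral_map' (hφ.map_eq.symm ▸ hF) hφ.aemeasurable]

lemma exists_simpleFunc_lintegral_edist_lt {Ω X : Type*} {mΩ : MeasurableSpace Ω}
    {P : Measure Ω} [PseudoMetricSpace X] [MeasurableSpace X] [BorelSpace X] {f : Ω → X}
    (hf : AEStronglyMeasurable f P) {y₀ : X}
    (hy₀ : ∫⁻ ω, edist (f ω) y₀ ∂P ≠ ∞) {ε : ℝ≥0∞} (hε : 0 < ε) :
    ∃ g : SimpleFunc Ω X, ∫⁻ ω, edist (f ω) (g ω) ∂P < ε := by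
  let s : Set X := Set.range (hf.mk f) ∪ {y₀}
  have hs : TopologicalSpace.SeparableSpace s :=
    (hf.stronglyMeasurable_mk.isSeparable_range.union
      (Set.finite_singleton y₀).isSeparable).separableSpace
  have hm : Measurable (hf.mk f) := hf.stronglyMeasurable_mk.measurable
  have hy₀s : y₀ ∈ s := Or.inr rfl
  let g (n : ℕ) : SimpleFunc Ω X := SimpleFunc.approxOn (hf.mk f) hm s y₀ hy₀s n
  have hlim : Tendsto (fun n => ∫⁻ ω, edist (f ω) (g n ω) ∂P) atTop (𝓝 (∫⁻ _, 0 ∂P)) := by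
    refine tendsto_lintegral_of_dominated_convergence' (fun ω => edist (f ω) y₀)
      (fun n => hf.edist (g n).aestronglyMeasurable) (fun n => ?_) hy₀ ?_
    · filter_upwards [hf.ae_eq_mk] with ω hω
      rw [hω, edist_comm, edist_comm _ y₀]
      exact SimpleFunc.edist_approxOn_le hm hy₀s ω n
    · filter_upwards [hf.ae_eq_mk] with ω hω
      rw [hω, ← edist_self (hf.mk f ω)]
      exact tendsto_const_nhds.edist (SimpleFunc.tendsto_approxOn hm hy₀s
        (subset_closure (Or.inl (Set.mem_range_self ω))))
  rw [lintegral_zero] at hlim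
  obtain ⟨n, hn⟩ := (hlim.eventually_lt_const hε).exists
  exact ⟨g n, hn⟩

end Measurability

/-! ### Means of independent samples -/

section Count

open MeasureTheory ProbabilityTheory Finset

variable {Ω : Type*} {mΩ : MeasurableSpace Ω} {P : Measure Ω} [IsProbabilityMeasure P]

lemma integral_abs_sub_integral_le_sqrt_variance {Y : Ω → ℝ} (hY : MemLp Y 2 P) :
    ∫ ω, |Y ω - P[Y]| ∂P ≤ √Var[Y; P] := by
  have hZ : MemLp (fun ω => |Y ω - P[Y]|) 2 P := (hY.sub (memLp_const _)).abs
  have h := variance_nonneg (fun ω => |Y ω - P[Y]|) P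
  rw [variance_eq_sub hZ] at h
  refine Real.le_sqrt_of_sq_le ?_
  rw [variance_eq_integral hY.aemeasurable]
  simpa [sq_abs] using h

variable {ι : Type*} [Fintype ι] {p : Ω → Prop} [DecidablePred p]

lemma card_filter_eq_sum_indicator :
    (fun ω : ι → Ω => (#{i | p (ω i)} : ℝ)) = ∑ i, fun ω => {x | p x}.indicator 1 (ω i) := by
  ext ω
  simp [Set.indicator_apply]

lemma memLp_card_filter (hp : MeasurableSet {x | p x}) :
    MemLp (fun ω : ι → Ω => (#{i | p (ω i)} : ℝ)) 2 (Measure.pi fun _ => P) := by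
  rw [card_filter_eq_sum_indicator]
  exact memLp_finsetSum' _ fun i _ => (memLp_indicator_const 2 hp (1 : ℝ) (by simp)
    ).comp_measurePreserving (measurePreserving_eval (fun _ : ι => P) i)

lemma integrable_abs_card_filter_sub (hp : MeasurableSet {x | p x}) (c : ℝ) :
    Integrable (fun ω : ι → Ω => |(#{i | p (ω i)} : ℝ) - c|) (Measure.pi fun _ => P) :=
  (((memLp_card_filter hp).integrable one_le_two).sub (integrable_const c)).abs

lemma variance_card_filter_le (hp : MeasurableSet {x | p x}) :
    Var[fun ω : ι → Ω => (#{i | p (ω i)} : ℝ); Measure.pi fun _ => P] ≤ Fintype.card ι / 4 := by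
  have hmem : MemLp ({x | p x}.indicator (1 : Ω → ℝ)) 2 P :=
    memLp_indicator_const _ hp _ (by simp)
  have hvar : Var[{x | p x}.indicator (1 : Ω → ℝ); P] ≤ ((1 - 0) / 2) ^ 2 :=
    variance_le_sq_of_bounded (.of_forall fun ω => ⟨Set.indicator_nonneg (by simp) _,
      Set.indicator_le_self' (by simp) _⟩) hmem.aemeasurable
  rw [card_filter_eq_sum_indicator, variance_sum_pi fun _ => hmem, sum_const, card_univ,
    nsmul_eq_mul]
  linarith [mul_le_mul_of_nonneg_left hvar (Nat.cast_nonneg (α := ℝ) (Fintype.card ι))]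

lemma integral_abs_card_filter_sub_le (hp : MeasurableSet {x | p x}) :
    ∫ ω, |(#{i | p (ω i)} : ℝ) - ∫ ω', (#{i | p (ω' i)} : ℝ) ∂Measure.pi fun _ : ι => P|
      ∂(Measure.pi fun _ : ι => P) ≤ √(Fintype.card ι) / 2 := by
  refine (integral_abs_sub_integral_le_sqrt_variance (memLp_card_filter hp)).trans ?_
  refine (Real.sqrt_le_sqrt (variance_card_filter_le hp)).trans_eq ?_
  rw [Real.sqrt_div (Nat.cast_nonneg _), show (4 : ℝ) = 2 ^ 2 by norm_num,
    Real.sqrt_sq zero_le_two]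

open Classical in
lemma exists_integral_sum_abs_card_fiber_sub_le {α : Type*} (g : SimpleFunc Ω α) :
    ∃ ω₀ : ι → Ω, ∫ ω : ι → Ω, ∑ a ∈ g.range, |(#{i | g (ω i) = a} - #{i | g (ω₀ i) = a} : ℝ)|
      ∂(Measure.pi fun _ => P) ≤ #g.range * √(Fintype.card ι) := by
  let N (a : α) (ω : ι → Ω) : ℝ := #{i | g (ω i) = a}
  let E (a : α) : ℝ := ∫ ω, N a ω ∂Measure.pi fun _ => P
  have hint (c : ℝ) (a : α) : Integrable (fun ω => |N a ω - c|) (Measure.pi fun _ => P) :=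
    integrable_abs_card_filter_sub (p := (g · = a)) (g.measurableSet_fiber a) c
  have hintE := integrable_finsetSum g.range fun a _ => hint (E a) a
  have hE : ∫ ω, ∑ a ∈ g.range, |N a ω - E a| ∂(Measure.pi fun _ => P) ≤
      #g.range * (√(Fintype.card ι) / 2) := by
    rw [integral_finsetSum _ fun a _ => hint (E a) a, ← nsmul_eq_mul]
    exact sum_le_card_nsmul _ _ _ fun a _ =>
      integral_abs_card_filter_sub_le (p := (g · = a)) (g.measurableSet_fiber a)
  -- Counts in some sample are at most average far from their means, so they can replace the means.
  obtain ⟨ω₀, hω₀⟩ := exists_le_integral hintE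
  refine ⟨ω₀, ?_⟩
  calc ∫ ω, ∑ a ∈ g.range, |N a ω - N a ω₀| ∂(Measure.pi fun _ => P)
    _ ≤ ∫ ω, (∑ a ∈ g.range, |N a ω - E a| + ∑ a ∈ g.range, |N a ω₀ - E a|)
        ∂(Measure.pi fun _ => P) := by
      refine integral_mono (integrable_finsetSum _ fun a _ => hint _ a)
        (hintE.add (integrable_const _)) fun ω => ?_
      simp only [← sum_add_distrib]
      refine sum_le_sum fun a _ => ?_
      rw [abs_sub_comm (N a ω₀)]
      exact abs_sub_le _ _ _
    _ ≤ #g.range * √(Fintype.card ι) := by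
      rw [integral_add hintE (integrable_const _), integral_const, probReal_univ, one_smul]
      linarith

end Count

section Sample

open MeasureTheory

variable {Ω X ι : Type*} {mΩ : MeasurableSpace Ω} {P : Measure Ω} [IsProbabilityMeasure P]
  [PseudoMetricSpace X] [Fintype ι] [Nonempty ι] {b : (ι → X) → X} {f g : Ω → X}

lemma IsContractingMean.aestronglyMeasurable_comp (hb : IsContractingMean b)
    (hf : AEStronglyMeasurable f P) :
    AEStronglyMeasurable (fun ω => b (f ∘ ω)) (Measure.pi fun _ : ι => P) :=
  hb.lipschitzWith.continuous.comp_aestronglyMeasurable <| aestronglyMeasurable_of_forall_apply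
    fun i => hf.comp_measurePreserving (measurePreserving_eval _ i)

lemma IsContractingMean.lintegral_edist_comp_le (hb : IsContractingMean b)
    (hf : AEStronglyMeasurable f P) (hg : AEStronglyMeasurable g P) :
    ∫⁻ ω, edist (b (f ∘ ω)) (b (g ∘ ω)) ∂(Measure.pi fun _ : ι => P) ≤
      ∫⁻ ω, edist (f ω) (g ω) ∂P := by
  have heval (i : ι) := measurePreserving_eval (fun _ : ι => P) i
  have hfg : AEMeasurable (fun ω => edist (f ω) (g ω)) P := hf.edist hg
  have hcoord (i : ι) : ∫⁻ ω, edist (f (ω i)) (g (ω i)) ∂(Measure.pi fun _ : ι => P) =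
      ∫⁻ ω, edist (f ω) (g ω) ∂P :=
    lintegral_comp_measurePreserving (heval i) hfg
  have hcard : (Fintype.card ι : ℝ≥0∞) ≠ 0 := by simp
  refine (ENNReal.mul_le_mul_iff_right hcard (ENNReal.natCast_ne_top _)).1 ?_
  calc Fintype.card ι * ∫⁻ ω, edist (b (f ∘ ω)) (b (g ∘ ω)) ∂(Measure.pi fun _ : ι => P)
    _ = ∫⁻ ω, Fintype.card ι * edist (b (f ∘ ω)) (b (g ∘ ω)) ∂(Measure.pi fun _ : ι => P) :=
      (lintegral_const_mul' _ _ (ENNReal.natCast_ne_top _)).symm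
    _ ≤ ∫⁻ ω, ∑ i, edist (f (ω i)) (g (ω i)) ∂(Measure.pi fun _ : ι => P) :=
      lintegral_mono fun ω => hb.card_mul_edist_le (f ∘ ω) (g ∘ ω)
    _ = ∑ i, ∫⁻ ω, edist (f (ω i)) (g (ω i)) ∂(Measure.pi fun _ : ι => P) :=
      lintegral_finsetSum' _ fun i _ =>
        hfg.comp_quasiMeasurePreserving (heval i).quasiMeasurePreserving
    _ = Fintype.card ι * ∫⁻ ω, edist (f ω) (g ω) ∂P := by simp [hcoord]

open Classical Finset in
lemma IsContractingMean.exists_lintegral_edist_le (hb : IsContractingMean b)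
    (g : SimpleFunc Ω X) {D : ℝ} (hD : ∀ a ∈ g.range, ∀ a' ∈ g.range, dist a a' ≤ D) :
    ∃ z, ∫⁻ ω, edist (b (g ∘ ω)) z ∂(Measure.pi fun _ : ι => P) ≤
      ENNReal.ofReal (#g.range * D / √(Fintype.card ι)) := by
  obtain ⟨ω₀, hω₀⟩ := exists_integral_sum_abs_card_fiber_sub_le (ι := ι) (P := P) g
  let S (ω : ι → Ω) : ℝ := ∑ a ∈ g.range, |(#{i | g (ω i) = a} - #{i | g (ω₀ i) = a} : ℝ)|
  have hS : Integrable S (Measure.pi fun _ => P) := integrable_finsetSum _ fun a _ =>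
    integrable_abs_card_filter_sub (p := (g · = a)) (g.measurableSet_fiber a) _
  have hD0 : 0 ≤ D :=
    have h := g.mem_range_self (ω₀ (Classical.arbitrary ι))
    dist_nonneg.trans (hD _ h _ h)
  have hdist (ω : ι → Ω) : dist (b (g ∘ ω)) (b (g ∘ ω₀)) ≤ S ω * D / Fintype.card ι := by
    rw [le_div_iff₀' (Nat.cast_pos.2 Fintype.card_pos)]
    exact hb.card_mul_dist_le_sum_abs (fun i => g.mem_range_self (ω i))
      (fun i => g.mem_range_self (ω₀ i)) hD
  refine ⟨b (g ∘ ω₀), ?_⟩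
  calc ∫⁻ ω, edist (b (g ∘ ω)) (b (g ∘ ω₀)) ∂(Measure.pi fun _ : ι => P)
    _ ≤ ∫⁻ ω, ENNReal.ofReal (S ω * D / Fintype.card ι) ∂(Measure.pi fun _ => P) :=
      lintegral_mono fun ω => (edist_dist _ _).trans_le (ENNReal.ofReal_le_ofReal (hdist ω))
    _ = ENNReal.ofReal ((∫ ω, S ω ∂(Measure.pi fun _ => P)) * D / Fintype.card ι) := by
      rw [← ofReal_integral_eq_lintegral_ofReal ((hS.mul_const _).div_const _)
        (.of_forall fun ω => dist_nonneg.trans (hdist ω)), integral_div, integral_mul_const]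
    _ ≤ ENNReal.ofReal (#g.range * √(Fintype.card ι) * D / Fintype.card ι) := by gcongr
    _ = ENNReal.ofReal (#g.range * D / √(Fintype.card ι)) := by
      rw [mul_right_comm, mul_div_assoc, Real.sqrt_div_self', mul_one_div]

end Sample

section LimitDistance

open Filter Topology MeasureTheory

variable {Ω X : Type*} {mΩ : MeasurableSpace Ω} [PseudoMetricSpace X]

/-- The expected distance from `z` to the mean `b n` of `n + 2` independent copies of the random
point `f`. -/
noncomputable def sampleDist (b : ∀ n, (Fin (n + 2) → X) → X) (P : Measure Ω) (f : Ω → X) (n : ℕ)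
    (z : X) : ℝ≥0∞ :=
  ∫⁻ ω, edist (b n (f ∘ ω)) z ∂Measure.pi fun _ : Fin (n + 2) => P

/-- The limit of `sampleDist b P f n z` as the sample size grows. It is encoded as an infimum, as
`sampleDist` is antitone in `n` for the sequences `b` of interest. Its zero is the barycenter of the
law of `f`. -/
noncomputable def limDist (b : ∀ n, (Fin (n + 2) → X) → X) (P : Measure Ω) (f : Ω → X)
    (z : X) : ℝ≥0∞ :=
  ⨅ n, sampleDist b P f n z

variable {b : ∀ n, (Fin (n + 2) → X) → X} {P : Measure Ω} [IsProbabilityMeasure P] {f g : Ω → X}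

lemma measurePreserving_removeNth {n : ℕ} (i : Fin (n + 1)) :
    MeasurePreserving (fun ω : Fin (n + 1) → Ω => i.removeNth ω) (Measure.pi fun _ => P)
      (Measure.pi fun _ => P) :=
  measurePreserving_snd.comp (measurePreserving_piFinSuccAbove (fun _ => P) i)

lemma limDist_le_edist_add (z w : X) : limDist b P f z ≤ edist z w + limDist b P f w := by
  rw [limDist, limDist, ENNReal.add_iInf]
  refine iInf_mono fun n => ?_
  calc sampleDist b P f n z
    _ ≤ ∫⁻ ω, (edist z w + edist (b n (f ∘ ω)) w) ∂(Measure.pi fun _ => P) :=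
      lintegral_mono fun ω => (edist_triangle_right _ _ _).trans_eq (add_comm _ _)
    _ = edist z w + sampleDist b P f n w := by
      rw [lintegral_add_left measurable_const, lintegral_const, measure_univ, mul_one, sampleDist]

namespace IsMeanSequence

lemma aestronglyMeasurable_comp (hb : IsMeanSequence b) (hf : AEStronglyMeasurable f P) (n : ℕ) :
    AEStronglyMeasurable (fun ω => b n (f ∘ ω)) (Measure.pi fun _ => P) :=
  (hb.isContractingMean n).aestronglyMeasurable_comp hf

lemma antitone_sampleDist (hb : IsMeanSequence b) (hf : AEStronglyMeasurable f P) (z : X) :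
    Antitone fun n => sampleDist b P f n z := by
  refine antitone_nat_of_succ_le fun n => ?_
  have hremove (i : Fin (n + 3)) := measurePreserving_removeNth (P := P) i
  have hmeas : AEMeasurable (fun ω => edist (b n (f ∘ ω)) z) (Measure.pi fun _ => P) :=
    (hb.aestronglyMeasurable_comp hf n).edist aestronglyMeasurable_const
  have hlaw (i : Fin (n + 3)) :
      ∫⁻ ω, edist (b n (f ∘ i.removeNth ω)) z ∂(Measure.pi fun _ => P) = sampleDist b P f n z :=
    lintegral_comp_measurePreserving (hremove i) hmeas
  refine (ENNReal.mul_le_mul_iff_right (Nat.cast_ne_zero.2 (Nat.succ_ne_zero (n + 2)))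
    (ENNReal.natCast_ne_top _)).1 ?_
  calc (n + 3 : ℕ) * sampleDist b P f (n + 1) z
    _ = ∫⁻ ω, (n + 3 : ℕ) * edist (b (n + 1) (f ∘ ω)) z ∂(Measure.pi fun _ => P) :=
      (lintegral_const_mul' _ _ (ENNReal.natCast_ne_top _)).symm
    _ ≤ ∫⁻ ω, ∑ i : Fin (n + 3), edist (b n (f ∘ i.removeNth ω)) z ∂(Measure.pi fun _ => P) :=
      lintegral_mono fun ω => hb.card_mul_edist_succ_le n (f ∘ ω) z
    _ = ∑ i : Fin (n + 3), ∫⁻ ω, edist (b n (f ∘ i.removeNth ω)) z ∂(Measure.pi fun _ => P) :=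
      lintegral_finsetSum' _ fun i _ =>
        hmeas.comp_quasiMeasurePreserving (hremove i).quasiMeasurePreserving
    _ = (n + 3 : ℕ) * sampleDist b P f n z := by simp [hlaw]

lemma sampleDist_le_lintegral_add (hb : IsMeanSequence b) (hf : AEStronglyMeasurable f P)
    (hg : AEStronglyMeasurable g P) (n : ℕ) (z : X) :
    sampleDist b P f n z ≤ ∫⁻ ω, edist (f ω) (g ω) ∂P + sampleDist b P g n z :=
  calc sampleDist b P f n z
    _ ≤ ∫⁻ ω, (edist (b n (f ∘ ω)) (b n (g ∘ ω)) + edist (b n (g ∘ ω)) z)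
        ∂(Measure.pi fun _ => P) :=
      lintegral_mono fun ω => edist_triangle _ _ _
    _ = ∫⁻ ω, edist (b n (f ∘ ω)) (b n (g ∘ ω)) ∂(Measure.pi fun _ => P) + sampleDist b P g n z :=
      lintegral_add_left' ((hb.aestronglyMeasurable_comp hf n).edist
        (hb.aestronglyMeasurable_comp hg n)) _
    _ ≤ ∫⁻ ω, edist (f ω) (g ω) ∂P + sampleDist b P g n z := by
      gcongr
      exact (hb.isContractingMean n).lintegral_edist_comp_le hf hg

lemma limDist_le_lintegral_add (hb : IsMeanSequence b) (hf : AEStronglyMeasurable f P)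
    (hg : AEStronglyMeasurable g P) (z : X) :
    limDist b P f z ≤ ∫⁻ ω, edist (f ω) (g ω) ∂P + limDist b P g z := by
  rw [limDist, limDist, ENNReal.add_iInf]
  exact iInf_mono fun n => hb.sampleDist_le_lintegral_add hf hg n z

lemma edist_le_limDist_add (hb : IsMeanSequence b) (hf : AEStronglyMeasurable f P) (z w : X) :
    edist z w ≤ limDist b P f z + limDist b P f w := by
  have hanti := hb.antitone_sampleDist hf
  rw [limDist, limDist, ENNReal.iInf_add_iInf fun i j =>
    ⟨max i j, add_le_add (hanti z (le_max_left i j)) (hanti w (le_max_right i j))⟩]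
  refine le_iInf fun n => ?_
  calc edist z w
    _ = ∫⁻ _, edist z w ∂(Measure.pi fun _ : Fin (n + 2) => P) := by simp
    _ ≤ ∫⁻ ω, (edist (b n (f ∘ ω)) z + edist (b n (f ∘ ω)) w) ∂(Measure.pi fun _ => P) :=
      lintegral_mono fun ω => edist_triangle_left _ _ _
    _ = sampleDist b P f n z + sampleDist b P f n w :=
      lintegral_add_left' ((hb.aestronglyMeasurable_comp hf n).edist aestronglyMeasurable_const) _

lemma limDist_const (hb : IsMeanSequence b) (a : X) : limDist b P (fun _ => a) a = 0 := by
  refine le_bot_iff.1 ((iInf_le _ 0).trans_eq ?_)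
  simp [sampleDist, Function.comp_def, (hb.isContractingMean 0).const]

lemma exists_sampleDist_simpleFunc_lt (hb : IsMeanSequence b) (g : SimpleFunc Ω X) {ε : ℝ≥0∞}
    (hε : 0 < ε) : ∃ n z, sampleDist b P g n z < ε := by
  have hbdd := g.range.finite_toSet.isBounded
  have hlim : Tendsto (fun n : ℕ => ENNReal.ofReal (g.range.card *
      Metric.diam (g.range : Set X) / √(Fintype.card (Fin (n + 2))))) atTop (𝓝 0) := by
    rw [← ENNReal.ofReal_zero]
    simp only [Fintype.card_fin]
    refine ENNReal.tendsto_ofReal (tendsto_const_nhds.div_atTop (Real.tendsto_sqrt_atTop.comp ?_))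
    exact tendsto_natCast_atTop_atTop.comp (tendsto_add_atTop_nat 2)
  obtain ⟨n, hn⟩ := (hlim.eventually_lt_const hε).exists
  obtain ⟨z, hz⟩ := (hb.isContractingMean n).exists_lintegral_edist_le (P := P) g
    fun a ha a' ha' => Metric.dist_le_diam_of_mem hbdd ha ha'
  exact ⟨n, z, hz.trans_lt hn⟩

lemma limDist_comp {Ω' : Type*} {mΩ' : MeasurableSpace Ω'} {Q : Measure Ω'}
    [IsProbabilityMeasure Q] (hb : IsMeanSequence b) {φ : Ω' → Ω} (hφ : MeasurePreserving φ Q P)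
    (hf : AEStronglyMeasurable f P) (z : X) : limDist b Q (f ∘ φ) z = limDist b P f z := by
  refine iInf_congr fun n => ?_
  have hpi := measurePreserving_pi (fun _ : Fin (n + 2) => Q) (fun _ => P) fun _ => hφ
  exact lintegral_comp_measurePreserving hpi
    ((hb.aestronglyMeasurable_comp hf n).edist aestronglyMeasurable_const)

lemma edist_le_lintegral (hb : IsMeanSequence b)
    (hf : AEStronglyMeasurable f P) (hg : AEStronglyMeasurable g P) {z w : X}
    (hz : limDist b P f z = 0) (hw : limDist b P g w = 0) :
    edist z w ≤ ∫⁻ ω, edist (f ω) (g ω) ∂P :=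
  calc edist z w
    _ ≤ limDist b P f z + limDist b P f w := hb.edist_le_limDist_add hf z w
    _ ≤ 0 + (∫⁻ ω, edist (f ω) (g ω) ∂P + limDist b P g w) :=
      add_le_add hz.le (hb.limDist_le_lintegral_add hf hg w)
    _ = ∫⁻ ω, edist (f ω) (g ω) ∂P := by rw [hw, zero_add, add_zero]

variable [MeasurableSpace X] [BorelSpace X]

lemma exists_limDist_lt (hb : IsMeanSequence b) (hf : AEStronglyMeasurable f P) {y₀ : X}
    (hy₀ : ∫⁻ ω, edist (f ω) y₀ ∂P ≠ ∞) {ε : ℝ≥0∞} (hε : 0 < ε) :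
    ∃ z, limDist b P f z < ε := by
  obtain ⟨g, hg⟩ := exists_simpleFunc_lintegral_edist_lt hf hy₀ (ENNReal.half_pos hε.ne')
  obtain ⟨n, z, hz⟩ := hb.exists_sampleDist_simpleFunc_lt (P := P) g (ENNReal.half_pos hε.ne')
  refine ⟨z, (iInf_le _ n).trans_lt ?_⟩
  calc sampleDist b P f n z
    _ ≤ ∫⁻ ω, edist (f ω) (g ω) ∂P + sampleDist b P g n z :=
      hb.sampleDist_le_lintegral_add hf g.aestronglyMeasurable n z
    _ < ε / 2 + ε / 2 := ENNReal.add_lt_add hg hz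
    _ = ε := ENNReal.add_halves ε

end IsMeanSequence

lemma exists_eq_zero_of_edist_le_add {X : Type*} [PseudoEMetricSpace X] [CompleteSpace X]
    {F : X → ℝ≥0∞} (hF : ∀ z w, edist z w ≤ F z + F w) (hF' : ∀ z w, F z ≤ edist z w + F w)
    (hF₀ : ∀ ε, 0 < ε → ∃ z, F z < ε) : ∃ c, F c = 0 := by
  have hbasis := ENNReal.nhds_zero_basis.comap F
  have hne : (comap F (𝓝 0)).NeBot := hbasis.neBot_iff.2 fun hε => hF₀ _ hε
  have hcauchy : Cauchy (comap F (𝓝 0)) := by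
    refine EMetric.cauchy_iff.2 ⟨hne.ne, fun ε hε => ⟨_,
      hbasis.mem_of_mem (ENNReal.half_pos hε.ne'), fun z hz w hw => (hF z w).trans_lt ?_⟩⟩
    exact (ENNReal.add_lt_add hz hw).trans_eq (ENNReal.add_halves ε)
  obtain ⟨c, hc⟩ := CompleteSpace.complete hcauchy
  have hlim : Tendsto (fun z => edist c z + F z) (comap F (𝓝 0)) (𝓝 (edist c c + 0)) :=
    (tendsto_const_nhds.edist (tendsto_id.mono_right hc)).add tendsto_comap
  rw [edist_self, add_zero] at hlim
  exact ⟨c, le_bot_iff.1 (ge_of_tendsto' hlim (hF' c))⟩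

end LimitDistance

/-! ### The barycenter map of a mean sequence -/

section Barycenter

open MeasureTheory

variable {X : Type*} [MetricSpace X] [MeasurableSpace X] [BorelSpace X]

lemma MemP1.aestronglyMeasurable_id {μ : Measure X} (hμ : MemP1 μ) :
    AEStronglyMeasurable id μ := by
  have := hμ.1
  have := hμ.2.1
  exact aestronglyMeasurable_id_of_innerRegular μ

namespace IsMeanSequence

variable {b : ∀ n, (Fin (n + 2) → X) → X}

lemma exists_limDist_eq_zero [CompleteSpace X] (hb : IsMeanSequence b)
    {μ : Measure X} (hμ : MemP1 μ) : ∃ c, limDist b μ id c = 0 := by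
  have := hμ.1
  obtain ⟨y₀⟩ := nonempty_of_isProbabilityMeasure μ
  exact exists_eq_zero_of_edist_le_add (hb.edist_le_limDist_add hμ.aestronglyMeasurable_id)
    limDist_le_edist_add fun ε hε =>
      hb.exists_limDist_lt hμ.aestronglyMeasurable_id (hμ.2.2 y₀) hε

lemma edist_le_W1 (hb : IsMeanSequence b) {μ ν : Measure X} (hμ : MemP1 μ)
    (hν : MemP1 ν) {z w : X} (hz : limDist b μ id z = 0) (hw : limDist b ν id w = 0) :
    edist z w ≤ W1 μ ν := by
  have := hμ.1
  have := hν.1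
  refine le_iInf₂ fun γ ⟨_, hfst, hsnd⟩ => ?_
  have hγμ : MeasurePreserving Prod.fst γ μ := ⟨measurable_fst, hfst⟩
  have hγν : MeasurePreserving Prod.snd γ ν := ⟨measurable_snd, hsnd⟩
  exact hb.edist_le_lintegral (hμ.aestronglyMeasurable_id.comp_measurePreserving hγμ)
    (hν.aestronglyMeasurable_id.comp_measurePreserving hγν)
    ((hb.limDist_comp hγμ hμ.aestronglyMeasurable_id z).trans hz)
    ((hb.limDist_comp hγν hν.aestronglyMeasurable_id w).trans hw)

lemma eq_of_limDist_dirac_eq_zero (hb : IsMeanSequence b) {x z : X}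
    (hx : MemP1 (Measure.dirac x)) (hz : limDist b (Measure.dirac x) id z = 0) : z = x := by
  have h := hb.edist_le_lintegral hx.aestronglyMeasurable_id aestronglyMeasurable_const hz
    (hb.limDist_const x)
  simpa using h

lemma exists_isContractingBarycenter [CompleteSpace X] (hb : IsMeanSequence b) :
    ∃ β : P1 X → X, IsContractingBarycenter β := by
  choose β hβ using fun μ : P1 X => hb.exists_limDist_eq_zero μ.2
  refine ⟨β, fun μ ν => hb.edist_le_W1 μ.2 ν.2 (hβ μ) (hβ ν), ?_⟩
  rintro x ⟨_, hμ⟩ rfl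
  exact hb.eq_of_limDist_dirac_eq_zero hμ (hβ ⟨_, hμ⟩)

end IsMeanSequence

end Barycenter

/-! ### The bicombing of a barycenter map -/

section TwoPoint

open MeasureTheory Set

variable {X : Type*} [MeasurableSpace X]

/-- The measure `(1 - t) δ_x + t δ_y`, for `t ∈ [0, 1]`. -/
noncomputable def twoPoint (x y : X) (t : ℝ) : Measure X :=
  ENNReal.ofReal (1 - t) • Measure.dirac x + ENNReal.ofReal t • Measure.dirac y

lemma twoPoint_zero (x y : X) : twoPoint x y 0 = Measure.dirac x := by simp [twoPoint]

lemma twoPoint_one (x y : X) : twoPoint x y 1 = Measure.dirac y := by simp [twoPoint]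

lemma isProbabilityMeasure_twoPoint (x y : X) {t : ℝ} (ht : t ∈ Icc (0 : ℝ) 1) :
    IsProbabilityMeasure (twoPoint x y t) := by
  constructor
  simp [twoPoint, ← ENNReal.ofReal_add (sub_nonneg.2 ht.2) ht.1]

lemma map_twoPoint {Y : Type*} [MeasurableSpace Y] {φ : X → Y} (hφ : Measurable φ) (x y : X)
    (t : ℝ) : (twoPoint x y t).map φ = twoPoint (φ x) (φ y) t := by
  simp [twoPoint, Measure.map_add _ _ hφ, Measure.map_dirac' hφ]

lemma innerRegular_dirac [TopologicalSpace X] (x : X) : (Measure.dirac x).InnerRegular := by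
  refine ⟨fun s hs r hr => ?_⟩
  by_cases hx : x ∈ s
  · exact ⟨{x}, by simpa using hx, isCompact_singleton, by simpa [hx] using hr⟩
  · simp [hs, hx] at hr

variable [MetricSpace X] [MeasurableSingletonClass X]

lemma memP1_twoPoint (x y : X) {t : ℝ} (ht : t ∈ Icc (0 : ℝ) 1) : MemP1 (twoPoint x y t) := by
  have := innerRegular_dirac x
  have := innerRegular_dirac y
  refine ⟨isProbabilityMeasure_twoPoint x y ht, by unfold twoPoint; infer_instance, fun z => ?_⟩
  simp [twoPoint, ENNReal.mul_eq_top, edist_ne_top]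

lemma lintegral_edist_twoPoint (p q : X × X) {t : ℝ} (ht : t ∈ Icc (0 : ℝ) 1) :
    ∫⁻ r, edist r.1 r.2 ∂twoPoint p q t =
      ENNReal.ofReal ((1 - t) * dist p.1 p.2 + t * dist q.1 q.2) := by
  have ht' := sub_nonneg.2 ht.2
  simp only [twoPoint, lintegral_add_measure, lintegral_smul_measure, lintegral_dirac,
    smul_eq_mul, edist_dist]
  rw [ENNReal.ofReal_add (mul_nonneg ht' dist_nonneg) (mul_nonneg ht.1 dist_nonneg),
    ENNReal.ofReal_mul ht', ENNReal.ofReal_mul ht.1]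

lemma W1_twoPoint_le (x y x' y' : X) {t : ℝ} (ht : t ∈ Icc (0 : ℝ) 1) :
    W1 (twoPoint x y t) (twoPoint x' y' t) ≤
      ENNReal.ofReal ((1 - t) * dist x x' + t * dist y y') :=
  (iInf₂_le _ ⟨isProbabilityMeasure_twoPoint (x, x') (y, y') ht, map_twoPoint measurable_fst _ _ t,
    map_twoPoint measurable_snd _ _ t⟩).trans_eq (lintegral_edist_twoPoint _ _ ht)

lemma W1_twoPoint_le_of_le (x y : X) {s t : ℝ} (hs : 0 ≤ s) (hst : s ≤ t) (ht : t ≤ 1) :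
    W1 (twoPoint x y s) (twoPoint x y t) ≤ ENNReal.ofReal ((t - s) * dist x y) := by
  have ht' := sub_nonneg.2 ht
  have hst' := sub_nonneg.2 hst
  let γ : Measure (X × X) := ENNReal.ofReal (1 - t) • Measure.dirac (x, x) +
    (ENNReal.ofReal s • Measure.dirac (y, y) + ENNReal.ofReal (t - s) • Measure.dirac (x, y))
  have hfst : γ.map Prod.fst = twoPoint x y s := by
    simp only [γ, twoPoint, Measure.map_add _ _ measurable_fst, Measure.map_smul,
      Measure.map_dirac' measurable_fst]
    rw [← sub_add_sub_cancel 1 t s, ENNReal.ofReal_add ht' hst', add_smul]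
    abel
  have hsnd : γ.map Prod.snd = twoPoint x y t := by
    simp only [γ, twoPoint, Measure.map_add _ _ measurable_snd, Measure.map_smul,
      Measure.map_dirac' measurable_snd]
    rw [← add_smul, ← ENNReal.ofReal_add hs hst', add_sub_cancel]
  have hγ : IsProbabilityMeasure γ := by
    have := isProbabilityMeasure_twoPoint x y ⟨hs, hst.trans ht⟩
    rw [← hfst] at this
    exact Measure.isProbabilityMeasure_of_map Prod.fst
  refine (iInf₂_le γ ⟨hγ, hfst, hsnd⟩).trans_eq ?_
  simp [γ, lintegral_add_measure, edist_dist, ENNReal.ofReal_mul hst']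

end TwoPoint

lemma dist_eq_abs_sub_mul_of_dist_le {X : Type*} [PseudoMetricSpace X] {c : ℝ → X}
    (hc : ∀ s t, 0 ≤ s → s ≤ t → t ≤ 1 → dist (c s) (c t) ≤ (t - s) * dist (c 0) (c 1))
    {s t : ℝ} (hs : s ∈ Set.Icc (0 : ℝ) 1) (ht : t ∈ Set.Icc (0 : ℝ) 1) :
    dist (c s) (c t) = |s - t| * dist (c 0) (c 1) := by
  wlog hst : s ≤ t generalizing s t
  · rw [dist_comm, abs_sub_comm]
    exact this ht hs (le_of_not_ge hst)
  rw [abs_sub_comm, abs_of_nonneg (sub_nonneg.2 hst)]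
  have h₀ := hc 0 s le_rfl hs.1 hs.2
  have h₁ := hc t 1 ht.1 ht.2 le_rfl
  exact (hc s t hs.1 hst ht.2).antisymm (by linarith [dist_triangle4 (c 0) (c s) (c t) (c 1)])

section Bicombing

open Set

variable {X : Type*} [MetricSpace X] [MeasurableSpace X] [MeasurableSingletonClass X]

/-- The bicombing `(x, y, t) ↦ β ((1 - t) δ_x + t δ_y)` of a barycenter map `β`; the parameter is
clamped to `[0, 1]` to obtain a probability measure for every real `t`. -/
noncomputable def barycenterBicombing (β : P1 X → X) (x y : X) (t : ℝ) : X :=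
  β ⟨_, memP1_twoPoint x y (projIcc (0 : ℝ) 1 zero_le_one t).2⟩

namespace IsContractingBarycenter

variable {β : P1 X → X}

lemma barycenterBicombing_zero (hβ : IsContractingBarycenter β) (x y : X) :
    barycenterBicombing β x y 0 = x :=
  hβ.2 x _ (by simp [twoPoint_zero])

lemma barycenterBicombing_one (hβ : IsContractingBarycenter β) (x y : X) :
    barycenterBicombing β x y 1 = y :=
  hβ.2 y _ (by simp [twoPoint_one])

lemma edist_barycenterBicombing_le (hβ : IsContractingBarycenter β) (x y x' y' : X) {s t : ℝ}
    (hs : s ∈ Icc (0 : ℝ) 1) (ht : t ∈ Icc (0 : ℝ) 1) :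
    edist (barycenterBicombing β x y s) (barycenterBicombing β x' y' t) ≤
      W1 (twoPoint x y s) (twoPoint x' y' t) := by
  simpa only [barycenterBicombing, projIcc_of_mem zero_le_one hs,
    projIcc_of_mem zero_le_one ht] using
    hβ.1 ⟨_, memP1_twoPoint x y (projIcc (0 : ℝ) 1 zero_le_one s).2⟩
      ⟨_, memP1_twoPoint x' y' (projIcc (0 : ℝ) 1 zero_le_one t).2⟩

lemma isGeodesicBicombing (hβ : IsContractingBarycenter β) :
    IsGeodesicBicombing (barycenterBicombing β) := by
  refine ⟨hβ.barycenterBicombing_zero, hβ.barycenterBicombing_one, fun x y s hs t ht => ?_⟩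
  have h := dist_eq_abs_sub_mul_of_dist_le (c := barycenterBicombing β x y) ?_ hs ht
  · rwa [hβ.barycenterBicombing_zero, hβ.barycenterBicombing_one] at h
  intro s t hs hst ht
  rw [hβ.barycenterBicombing_zero, hβ.barycenterBicombing_one,
    ← edist_le_ofReal (mul_nonneg (sub_nonneg.2 hst) dist_nonneg)]
  exact (hβ.edist_barycenterBicombing_le x y x y ⟨hs, hst.trans ht⟩ ⟨hs.trans hst, ht⟩).trans
    (W1_twoPoint_le_of_le x y hs hst ht)

lemma isConical (hβ : IsContractingBarycenter β) : IsConical (barycenterBicombing β) := by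
  intro x y x' y' t ht
  rw [← edist_le_ofReal (add_nonneg (mul_nonneg (sub_nonneg.2 ht.2) dist_nonneg)
    (mul_nonneg ht.1 dist_nonneg))]
  exact (hβ.edist_barycenterBicombing_le x y x' y' ht ht).trans (W1_twoPoint_le x y x' y' ht)

end IsContractingBarycenter

end Bicombing

section Midpoint

variable {X : Type*} [MetricSpace X] {σ : X → X → ℝ → X}

lemma IsGeodesicBicombing.self_apply (hσ : IsGeodesicBicombing σ) (x : X) {t : ℝ}
    (ht : t ∈ Set.Icc (0 : ℝ) 1) : σ x x t = x := by
  have h := hσ.2.2 x x t ht 0 ⟨le_rfl, zero_le_one⟩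
  rwa [hσ.1, dist_self, mul_zero, dist_eq_zero] at h

lemma IsConical.dist_midpoint_le (hσ : IsConical σ) (x y x' y' : X) :
    dist (σ x y (1 / 2)) (σ x' y' (1 / 2)) ≤ (dist x x' + dist y y') / 2 :=
  (hσ x y x' y' (1 / 2) ⟨by norm_num, by norm_num⟩).trans_eq (by ring)

end Midpoint

/-- **Barycentric metric spaces = spaces with a conical bicombing.**
A complete metric space admits a conical geodesic bicombing if and only if it admits a
contracting barycenter map `β : P₁(X) → X`. -/
theorem conical_bicombing_iff_contracting_barycenter
    {X : Type*} [MetricSpace X] [CompleteSpace X] [MeasurableSpace X] [BorelSpace X] :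
    (∃ σ : X → X → ℝ → X, IsGeodesicBicombing σ ∧ IsConical σ) ↔
      ∃ β : P1 X → X, IsContractingBarycenter β := by
  refine ⟨fun ⟨σ, hgeod, hconical⟩ => ?_, fun ⟨β, hβ⟩ =>
    ⟨barycenterBicombing β, hβ.isGeodesicBicombing, hβ.isConical⟩⟩
  have hself (a : X) : σ a a (1 / 2) = a := hgeod.self_apply a ⟨by norm_num, by norm_num⟩
  obtain ⟨b, hb⟩ := exists_isMeanSequence hself hconical.dist_midpoint_le
  exact hb.exists_isContractingBarycenter
end

section
/- Let (X,d) be a proper metric space admitting a conical geodesic bicombing. Then there exists a geodesic bicombing s on X such that: (1) s is consistent, i.e. whenever p = s(x,y,a) and q = s(x,y,b) with 0 ≤ a ≤ b ≤ 1, then s(p,q,λ) = s(x,y,(1−λ)a + λb) for all λ ∈ [0,1]; (2) for all x,y ∈ X the geodesic t ↦ s(x,y,t) is straight, i.e. for every z ∈ X the function t ↦ d(z, s(x,y,t)) is convex on [0,1]; and (3) for all x,y,x′,y′ ∈ X with d(x,y) = d(x′,y′), the function t ↦ d(s(x,y,t), s(x′,y′,t)) is convex on [0,1]. -/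
/-!
Iterating Banach's fixed point theorem, one finds for all `x, y` and `n > 0` a chain of `n` steps
from `x` to `y` in which every interior point is the chosen midpoint of its two neighbours. The
distance between corresponding points of two chains of equal length is a convex sequence, so a
chain is determined by its endpoints and its number of steps. In particular a piece of a chain is
*the* chain between its endpoints: at the discrete level consistency and convexity are automatic.

Let the number of steps from `x` to `y` be asymptotically proportional to `dist x y` and pass to
the limit along an ultrafilter, which by properness makes the chains converge for all `x, y`
simultaneously. A piece of the chain from `x` to `y` then has asymptotically as many steps as the
chain between its endpoints, so both converge to the same curve.
-/

open Filter Set Topology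
open scoped NNReal

section DiscreteConvexity

variable {𝕜 : Type*} [Field 𝕜] [LinearOrder 𝕜] [IsStrictOrderedRing 𝕜] {f : ℕ → 𝕜} {n : ℕ}

theorem succ_mul_sub_le_of_midpoint_convex
    (hf : ∀ i, i + 2 ≤ n → f (i + 1) ≤ (f i + f (i + 2)) / 2) :
    ∀ i, i + 1 ≤ n → (i + 1) * (f i - f 0) ≤ i * (f (i + 1) - f 0)
  | 0, _ => by simp
  | i + 1, hi => by
    have ih := succ_mul_sub_le_of_midpoint_convex hf i (by lia)
    have h := mul_le_mul_of_nonneg_left (hf i hi) (by positivity : (0 : 𝕜) ≤ i + 1)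
    push_cast
    linarith

theorem mul_sub_le_of_midpoint_convex
    (hf : ∀ i, i + 2 ≤ n → f (i + 1) ≤ (f i + f (i + 2)) / 2) {i : ℕ} (hi : i ≤ n) :
    n * (f i - f 0) ≤ i * (f n - f 0) := by
  induction n, hi using Nat.le_induction with
  | base => rfl
  | succ n hin ih =>
    rcases n.eq_zero_or_pos with rfl | hn
    · simp [Nat.le_zero.1 hin]
    have hpos : (0 : 𝕜) < n := by exact_mod_cast hn
    refine le_of_mul_le_mul_left ?_ hpos
    calc (n : 𝕜) * ((n + 1 : ℕ) * (f i - f 0))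
        = (n + 1) * (n * (f i - f 0)) := by push_cast; ring
      _ ≤ (n + 1) * (i * (f n - f 0)) :=
        mul_le_mul_of_nonneg_left (ih fun j hj => hf j (by lia)) (by positivity)
      _ = i * ((n + 1) * (f n - f 0)) := by ring
      _ ≤ i * (n * (f (n + 1) - f 0)) :=
        mul_le_mul_of_nonneg_left (succ_mul_sub_le_of_midpoint_convex hf n le_rfl)
          (Nat.cast_nonneg i)
      _ = n * (i * (f (n + 1) - f 0)) := by ring

theorem le_chord_of_midpoint_convex
    (hf : ∀ i, i + 2 ≤ n → f (i + 1) ≤ (f i + f (i + 2)) / 2) {i : ℕ} (hi : i ≤ n) :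
    f i ≤ (1 - i / n) * f 0 + i / n * f n := by
  rcases n.eq_zero_or_pos with rfl | hn
  · simp [Nat.le_zero.1 hi]
  have hpos : (0 : 𝕜) < n := by exact_mod_cast hn
  have h : f i - f 0 ≤ i * (f n - f 0) / n :=
    (le_div_iff₀' hpos).2 (mul_sub_le_of_midpoint_convex hf hi)
  linarith [h, show (i : 𝕜) * (f n - f 0) / n = i / n * f n - i / n * f 0 by ring]

end DiscreteConvexity

/-- A conical midpoint map: a choice of midpoints satisfying the conical inequality at
parameter `1 / 2`. -/
structure IsConicalMidpoint {X : Type*} [MetricSpace X] (m : X → X → X) : Prop where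
  dist_left : ∀ x y, dist x (m x y) = dist x y / 2
  dist_right : ∀ x y, dist (m x y) y = dist x y / 2
  dist_le : ∀ x y x' y', dist (m x y) (m x' y') ≤ (dist x x' + dist y y') / 2

theorem IsConicalMidpoint.self {X : Type*} [MetricSpace X] {m : X → X → X}
    (hm : IsConicalMidpoint m) (x : X) : m x x = x :=
  (dist_eq_zero.1 (by simp [hm.dist_left])).symm

theorem IsConical.isConicalMidpoint {X : Type*} [MetricSpace X] {σ : X → X → ℝ → X}
    (hc : IsConical σ) (hg : IsGeodesicBicombing σ) :
    IsConicalMidpoint fun x y => σ x y (1 / 2) where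
  dist_left x y := by
    have h := hg.2.2 x y 0 (by simp) (1 / 2) (by constructor <;> norm_num)
    rw [hg.1] at h
    norm_num [h, abs_of_pos]
    ring
  dist_right x y := by
    have h := hg.2.2 x y (1 / 2) (by constructor <;> norm_num) 1 (by simp)
    rw [hg.2.1] at h
    norm_num [h, abs_of_pos]
    ring
  dist_le x y x' y' := by
    have h := hc x y x' y' (1 / 2) (by constructor <;> norm_num)
    linarith

/-- The terms `u 0, …, u n` form a chain of `n` steps each of whose interior points is the
`m`-midpoint of its two neighbours. The remaining terms of `u` are irrelevant. -/
def IsMidpointChain {X : Type*} (m : X → X → X) (n : ℕ) (u : ℕ → X) : Prop :=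
  ∀ i, i + 2 ≤ n → u (i + 1) = m (u i) (u (i + 2))

namespace IsMidpointChain

section Basic

variable {X : Type*} {m : X → X → X} {n : ℕ} {u : ℕ → X}

theorem shift (hu : IsMidpointChain m n u) {i r : ℕ} (h : i + r ≤ n) :
    IsMidpointChain m r fun j => u (i + j) :=
  fun j hj => hu (i + j) (by lia)

theorem update_succ (hu : IsMidpointChain m (n + 1) u) {y : X} (h : u (n + 1) = m (u n) y) :
    IsMidpointChain m (n + 2) (Function.update u (n + 2) y) := by
  intro i hi
  rcases (Nat.le_of_add_le_add_right hi).eq_or_lt with rfl | hlt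
  · simpa using h
  · simpa [Function.update_of_ne, hlt.ne, show i ≠ n + 2 by lia, show i ≠ n + 1 by lia]
      using hu i (by lia)

end Basic

variable {X : Type*} [MetricSpace X] {m : X → X → X} {n : ℕ} {u v : ℕ → X}

theorem const (hm : IsConicalMidpoint m) (n : ℕ) (z : X) : IsMidpointChain m n fun _ => z :=
  fun _ _ => (hm.self z).symm

theorem dist_le (hm : IsConicalMidpoint m) (hu : IsMidpointChain m n u)
    (hv : IsMidpointChain m n v) {i : ℕ} (hi : i ≤ n) :
    dist (u i) (v i) ≤ (1 - i / n) * dist (u 0) (v 0) + i / n * dist (u n) (v n) :=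
  le_chord_of_midpoint_convex (f := fun i => dist (u i) (v i))
    (fun i hi => by simpa only [hu i hi, hv i hi] using hm.dist_le _ _ _ _) hi

theorem dist_succ (hm : IsConicalMidpoint m) (hu : IsMidpointChain m n u) :
    ∀ i, i + 1 ≤ n → dist (u i) (u (i + 1)) = dist (u 0) (u 1)
  | 0, _ => rfl
  | i + 1, hi => by
    rw [← dist_succ hm hu i (by lia), hu i hi, hm.dist_left, hm.dist_right]

theorem dist_zero_last (hm : IsConicalMidpoint m) (hu : IsMidpointChain m n u) :
    dist (u 0) (u n) = n * dist (u 0) (u 1) := by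
  rcases n.eq_zero_or_pos with rfl | hn
  · simp
  refine le_antisymm ?_ ?_
  · simpa using dist_le_range_sum_of_dist_le n fun {i} hi => (hu.dist_succ hm i hi).le
  · have hpos : (0 : ℝ) < n := by exact_mod_cast hn
    have h : dist (u 0) (u 1) ≤ dist (u 0) (u n) / n := by
      simpa [div_eq_inv_mul] using (const hm n (u 0)).dist_le hm hu hn
    exact (le_div_iff₀' hpos).1 h

theorem dist_add (hm : IsConicalMidpoint m) (hu : IsMidpointChain m n u) {i r : ℕ}
    (h : i + r ≤ n) : dist (u i) (u (i + r)) = r * dist (u 0) (u 1) := by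
  rcases r.eq_zero_or_pos with rfl | hr
  · simp
  · rw [← hu.dist_succ hm i (by lia)]
    exact (hu.shift h).dist_zero_last hm

theorem dist_eq (hm : IsConicalMidpoint m) (hu : IsMidpointChain m n u) {i j : ℕ}
    (hi : i ≤ n) (hj : j ≤ n) :
    dist (u i) (u j) = |(i / n : ℝ) - j / n| * dist (u 0) (u n) := by
  wlog hij : i ≤ j generalizing i j
  · rw [dist_comm, abs_sub_comm, this hj hi (by lia)]
  obtain ⟨r, rfl⟩ := Nat.exists_eq_add_of_le hij
  rcases n.eq_zero_or_pos with rfl | hn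
  · simp [show i = 0 by lia, show r = 0 by lia]
  have hparam : |(i / n : ℝ) - (i + r : ℕ) / n| = r / n := by
    rw [abs_sub_comm, ← sub_div, Nat.cast_add, add_sub_cancel_left, abs_of_nonneg (by positivity)]
  rw [hparam, hu.dist_add hm hj, hu.dist_zero_last hm]
  field_simp

theorem mem_closedBall (hm : IsConicalMidpoint m) (hu : IsMidpointChain m n u) {i : ℕ}
    (hi : i ≤ n) : u i ∈ Metric.closedBall (u 0) (dist (u 0) (u n)) := by
  have hin : (i / n : ℝ) ≤ 1 := div_le_one_of_le₀ (by exact_mod_cast hi) (Nat.cast_nonneg n)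
  rw [Metric.mem_closedBall, hu.dist_eq hm hi n.zero_le, Nat.cast_zero, zero_div, sub_zero,
    abs_of_nonneg (by positivity)]
  exact mul_le_of_le_one_left dist_nonneg hin

end IsMidpointChain

theorem IsConicalMidpoint.exists_isMidpointChain {X : Type*} [MetricSpace X] [CompleteSpace X]
    {m : X → X → X} (hm : IsConicalMidpoint m) {n : ℕ} (hn : n ≠ 0) (x y : X) :
    ∃ u, IsMidpointChain m n u ∧ u 0 = x ∧ u n = y := by
  obtain ⟨n, rfl⟩ := Nat.exists_eq_succ_of_ne_zero hn
  clear hn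
  induction n generalizing y with
  | zero => exact ⟨fun i => if i = 0 then x else y, fun i hi => by lia, by simp⟩
  | succ n ih =>
    choose C hC h0 h1 using ih
    -- Appending `y` to the chain `C p` gives a midpoint chain iff `p` is fixed by this map.
    have hcontr : ContractingWith (1 / 2) fun p => m (C p n) y := by
      refine ⟨by norm_num, LipschitzWith.of_dist_le_mul fun p q => ?_⟩
      have hn : (n / (n + 1 : ℕ) : ℝ) ≤ 1 := div_le_one_of_le₀ (by simp) (by positivity)
      calc dist (m (C p n) y) (m (C q n) y)
          ≤ dist (C p n) (C q n) / 2 := by simpa using hm.dist_le (C p n) y (C q n) y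
        _ ≤ n / (n + 1 : ℕ) * dist p q / 2 := by
          have h := (hC p).dist_le hm (hC q) n.le_succ
          simp only [h0, h1, dist_self, mul_zero, zero_add] at h
          gcongr
        _ ≤ 1 * dist p q / 2 := by gcongr
        _ = (1 / 2 : ℝ≥0) * dist p q := by push_cast; ring
    have : Nonempty X := ⟨x⟩
    obtain ⟨p, hp⟩ : ∃ p, m (C p n) y = p := ⟨_, hcontr.fixedPoint_isFixedPt⟩
    exact ⟨Function.update (C p) (n + 2) y, (hC p).update_succ ((h1 p).trans hp.symm),
      by simp [h0], by simp⟩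

section IndexSequences

variable {ι : Type*} {U : Filter ι} {n : ι → ℕ}

theorem exists_tendsto_natCast_div (hn : Tendsto n U atTop) {t : ℝ} (ht : t ∈ Icc (0 : ℝ) 1) :
    ∃ i : ι → ℕ, (∀ k, i k ≤ n k) ∧ Tendsto (fun k => (i k / n k : ℝ)) U (𝓝 t) :=
  ⟨fun k => ⌊t * n k⌋₊,
    fun _ => Nat.floor_le_of_le (mul_le_of_le_one_left (Nat.cast_nonneg _) ht.2),
    (tendsto_nat_floor_mul_div_atTop ht.1).comp (tendsto_natCast_atTop_atTop.comp hn)⟩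

theorem tendsto_natCast_div_self (hn : Tendsto n U atTop) :
    Tendsto (fun k => (n k / n k : ℝ)) U (𝓝 1) :=
  tendsto_const_nhds.congr' <| (hn.eventually_gt_atTop 0).mono fun _ hk =>
    (div_self (Nat.cast_ne_zero.2 hk.ne')).symm

theorem tendsto_atTop_of_natCast_div (hn : Tendsto n U atTop) {r : ι → ℕ} {d : ℝ} (hd : 0 < d)
    (hr : Tendsto (fun k => (r k / n k : ℝ)) U (𝓝 d)) : Tendsto r U atTop := by
  refine tendsto_natCast_atTop_iff.1
    ((hr.pos_mul_atTop hd (tendsto_natCast_atTop_atTop.comp hn)).congr' ?_)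
  filter_upwards [hn.eventually_gt_atTop 0] with k hk
  exact div_mul_cancel₀ _ (Nat.cast_ne_zero.2 hk.ne')

theorem exists_tendsto_natCast_div_subinterval (hn : Tendsto n U atTop) {a d : ℝ} {l : ι → ℕ}
    (ha : a ∈ Icc (0 : ℝ) 1) (had : a + d ≤ 1)
    (hl : Tendsto (fun k => (l k / n k : ℝ)) U (𝓝 d)) :
    ∃ i r : ι → ℕ, (∀ k, i k + r k ≤ n k) ∧ (∀ k, r k ≤ l k) ∧
      Tendsto (fun k => (i k / n k : ℝ)) U (𝓝 a) ∧ Tendsto (fun k => (r k / n k : ℝ)) U (𝓝 d) := by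
  obtain ⟨i, hin, hi⟩ := exists_tendsto_natCast_div hn ha
  refine ⟨i, fun k => min (l k) (n k - i k), fun k => ?_, fun _ => min_le_left _ _, hi, ?_⟩
  · have := hin k
    lia
  · have h := hl.min ((tendsto_natCast_div_self hn).sub hi)
    rw [min_eq_left (by linarith)] at h
    refine h.congr fun k => ?_
    rw [← sub_div, min_div_div_right (Nat.cast_nonneg _), Nat.cast_min, Nat.cast_sub (hin k)]

end IndexSequences

/-- The curve `c` on `[0, 1]` is the limit along `U` of midpoint chains, the `k`-th of which has
`n k` steps. Convergence is required along every sequence of indices, so that reparametrized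
pieces of the chains converge to the corresponding pieces of `c`. -/
def IsChainLimit {X ι : Type*} [MetricSpace X] (m : X → X → X) (U : Filter ι) (n : ι → ℕ)
    (c : ℝ → X) : Prop :=
  ∃ u : ι → ℕ → X, (∀ k, IsMidpointChain m (n k) (u k)) ∧
    ∀ (t : ℝ) (i : ι → ℕ), (∀ k, i k ≤ n k) → Tendsto (fun k => (i k / n k : ℝ)) U (𝓝 t) →
      Tendsto (fun k => u k (i k)) U (𝓝 (c t))

section ChainLimits

variable {X ι : Type*} [MetricSpace X] {m : X → X → X} {n l : ι → ℕ} {c c' : ℝ → X}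

theorem IsConicalMidpoint.exists_isChainLimit [ProperSpace X] (hm : IsConicalMidpoint m)
    {U : Ultrafilter ι} (hn : Tendsto n U atTop) (hn0 : ∀ k, n k ≠ 0) (x y : X) :
    ∃ c, IsChainLimit m U n c ∧ c 0 = x ∧ c 1 = y := by
  choose u hu hu0 hu1 using fun k => hm.exists_isMidpointChain (hn0 k) x y
  have hlim (t : ℝ) : ∃ p, ∀ i : ι → ℕ, (∀ k, i k ≤ n k) →
      Tendsto (fun k => (i k / n k : ℝ)) U (𝓝 t) → Tendsto (fun k => u k (i k)) U (𝓝 p) := by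
    by_cases h : ∃ j : ι → ℕ, (∀ k, j k ≤ n k) ∧ Tendsto (fun k => (j k / n k : ℝ)) U (𝓝 t)
    swap
    · exact ⟨x, fun i hin hi => (h ⟨i, hin, hi⟩).elim⟩
    obtain ⟨j, hjn, hj⟩ := h
    have hball (k : ι) : u k (j k) ∈ Metric.closedBall x (dist x y) := by
      simpa only [hu0, hu1] using (hu k).mem_closedBall hm (hjn k)
    obtain ⟨p, -, hp⟩ := (isCompact_closedBall x (dist x y)).ultrafilter_le_nhds
      (U.map fun k => u k (j k)) (le_principal_iff.2 (mem_map.2 (univ_mem' hball)))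
    refine ⟨p, fun i hin hi => Tendsto.congr_dist hp ?_⟩
    simp only [fun k => (hu k).dist_eq hm (hjn k) (hin k), hu0, hu1]
    simpa using (hj.sub hi).abs.mul_const (dist x y)
  choose c hc using hlim
  refine ⟨c, ⟨u, hu, hc⟩, ?_, ?_⟩
  · exact tendsto_nhds_unique (by simpa using hc 0 (fun _ => 0) (by simp) (by simp))
      (by simp [hu0])
  · simpa [hu1, eq_comm] using hc 1 n (fun _ => le_rfl) (tendsto_natCast_div_self hn)

namespace IsChainLimit

variable {U : Filter ι}

theorem const (hm : IsConicalMidpoint m) (U : Filter ι) (n : ι → ℕ) (z : X) :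
    IsChainLimit m U n fun _ => z :=
  ⟨fun _ _ => z, fun _ => .const hm _ z, fun _ _ _ _ => tendsto_const_nhds⟩

theorem restrict (hc : IsChainLimit m U n c) {i r : ι → ℕ} {a d : ℝ}
    (hir : ∀ k, i k + r k ≤ n k) (hi : Tendsto (fun k => (i k / n k : ℝ)) U (𝓝 a))
    (hr : Tendsto (fun k => (r k / n k : ℝ)) U (𝓝 d)) :
    IsChainLimit m U r fun t => c (a + t * d) := by
  obtain ⟨u, hu, hlim⟩ := hc
  refine ⟨fun k j => u k (i k + j), fun k => (hu k).shift (hir k), fun t j hjr hj => ?_⟩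
  refine hlim _ (fun k => i k + j k) (fun k => (Nat.add_le_add_left (hjr k) _).trans (hir k))
    ((hi.add (hj.mul hr)).congr fun k => ?_)
  have hcancel : (j k / r k * r k : ℝ) = j k :=
    div_mul_cancel_of_imp fun h => by
      have := hjr k
      norm_cast at h ⊢
      lia
  rw [← mul_div_assoc, hcancel, ← add_div, Nat.cast_add]

variable [NeBot U]

theorem dist_eq (hm : IsConicalMidpoint m) (hn : Tendsto n U atTop) (hc : IsChainLimit m U n c)
    {t t' : ℝ} (ht : t ∈ Icc (0 : ℝ) 1) (ht' : t' ∈ Icc (0 : ℝ) 1) :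
    dist (c t) (c t') = |t - t'| * dist (c 0) (c 1) := by
  obtain ⟨u, hu, hlim⟩ := hc
  obtain ⟨i, hin, hi⟩ := exists_tendsto_natCast_div hn ht
  obtain ⟨j, hjn, hj⟩ := exists_tendsto_natCast_div hn ht'
  have h0 := hlim 0 (fun _ => 0) (by simp) (by simp)
  have h1 := hlim 1 n (fun _ => le_rfl) (tendsto_natCast_div_self hn)
  exact tendsto_nhds_unique ((hlim t i hin hi).dist (hlim t' j hjn hj))
    (((hi.sub hj).abs.mul (h0.dist h1)).congr fun k => ((hu k).dist_eq hm (hin k) (hjn k)).symm)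

theorem dist_le (hm : IsConicalMidpoint m) (hn : Tendsto n U atTop) (hc : IsChainLimit m U n c)
    (hc' : IsChainLimit m U n c') {t : ℝ} (ht : t ∈ Icc (0 : ℝ) 1) :
    dist (c t) (c' t) ≤ (1 - t) * dist (c 0) (c' 0) + t * dist (c 1) (c' 1) := by
  obtain ⟨u, hu, hlim⟩ := hc
  obtain ⟨v, hv, hlim'⟩ := hc'
  obtain ⟨i, hin, hi⟩ := exists_tendsto_natCast_div hn ht
  have h0 := (hlim 0 (fun _ => 0) (by simp) (by simp)).dist
    (hlim' 0 (fun _ => 0) (by simp) (by simp))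
  have h1 := (hlim 1 n (fun _ => le_rfl) (tendsto_natCast_div_self hn)).dist
    (hlim' 1 n (fun _ => le_rfl) (tendsto_natCast_div_self hn))
  exact le_of_tendsto_of_tendsto' ((hlim t i hin hi).dist (hlim' t i hin hi))
    (((hi.const_sub 1).mul h0).add (hi.mul h1)) fun k => (hu k).dist_le hm (hv k) (hin k)

theorem convexOn_dist (hm : IsConicalMidpoint m) (hn : Tendsto n U atTop)
    (hc : IsChainLimit m U n c) (hc' : IsChainLimit m U n c') :
    ConvexOn ℝ (Icc (0 : ℝ) 1) fun t => dist (c t) (c' t) := by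
  refine LinearOrder.convexOn_of_lt (convex_Icc 0 1) fun a ha b hb hab v w hv hw hvw => ?_
  obtain rfl : v = 1 - w := by linarith
  obtain ⟨l, -, hl⟩ := exists_tendsto_natCast_div hn (t := b - a)
    ⟨by linarith, by linarith [ha.1, hb.2]⟩
  obtain ⟨i, r, hir, -, hi, hr⟩ :=
    exists_tendsto_natCast_div_subinterval hn ha (by linarith [hb.2]) hl
  have h := (hc.restrict hir hi hr).dist_le hm (tendsto_atTop_of_natCast_div hn (by linarith) hr)
    (hc'.restrict hir hi hr) ⟨hw.le, by linarith⟩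
  simpa [show (1 - w) * a + w * b = a + w * (b - a) by ring] using h

theorem eq_restrict (hm : IsConicalMidpoint m) (hn : Tendsto n U atTop)
    (hc : IsChainLimit m U n c) (hc' : IsChainLimit m U l c') {a b : ℝ}
    (ha : a ∈ Icc (0 : ℝ) 1) (hb : b ≤ 1) (hab : a < b)
    (hl : Tendsto (fun k => (l k / n k : ℝ)) U (𝓝 (b - a)))
    (h0 : c' 0 = c a) (h1 : c' 1 = c b) {t : ℝ} (ht : t ∈ Icc (0 : ℝ) 1) :
    c' t = c (a + t * (b - a)) := by
  have hd : 0 < b - a := sub_pos.2 hab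
  obtain ⟨i, r, hir, hrl, hi, hr⟩ :=
    exists_tendsto_natCast_div_subinterval hn ha (by linarith) hl
  have hr' : Tendsto (fun k => (r k / l k : ℝ)) U (𝓝 1) := by
    rw [← div_self hd.ne']
    refine (hr.div hl hd.ne').congr' ?_
    filter_upwards [hn.eventually_gt_atTop 0] with k hk
    exact div_div_div_cancel_right₀ (Nat.cast_ne_zero.2 hk.ne') _ _
  have h := (hc'.restrict (i := fun _ => 0) (a := 0) (by simpa using hrl) (by simp) hr').dist_le hm
    (tendsto_atTop_of_natCast_div hn hd hr) (hc.restrict hir hi hr) ht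
  simpa [h0, h1] using h

end IsChainLimit

end ChainLimits

/-- The number of steps used at stage `k` to subdivide a geodesic of length `l`. It is asymptotic to
`l * k ^ 2`; the lower order term makes it tend to infinity also for `l = 0`. -/
noncomputable def stepCount (l : ℝ) (k : ℕ) : ℕ := ⌊l * (k : ℝ) ^ 2⌋₊ + k + 1

theorem stepCount_ne_zero (l : ℝ) (k : ℕ) : stepCount l k ≠ 0 := Nat.succ_ne_zero _

theorem tendsto_stepCount (l : ℝ) : Tendsto (stepCount l) atTop atTop :=
  tendsto_atTop_mono (fun k => show k ≤ ⌊l * (k : ℝ) ^ 2⌋₊ + k + 1 by lia) tendsto_id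

theorem tendsto_stepCount_div_sq {l : ℝ} (hl : 0 ≤ l) :
    Tendsto (fun k => (stepCount l k / (k : ℝ) ^ 2 : ℝ)) atTop (𝓝 l) := by
  have hsq : Tendsto (fun k : ℕ => (k : ℝ) ^ 2) atTop atTop :=
    (tendsto_pow_atTop two_ne_zero).comp tendsto_natCast_atTop_atTop
  have hinv := tendsto_inv_atTop_nhds_zero_nat (𝕜 := ℝ)
  have h := (((tendsto_nat_floor_mul_div_atTop hl).comp hsq).add hinv).add (hinv.pow 2)
  rw [add_zero, zero_pow two_ne_zero, add_zero] at h
  refine h.congr' ?_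
  filter_upwards [eventually_gt_atTop 0] with k hk
  simp only [stepCount, Function.comp_apply]
  push_cast
  field_simp

theorem tendsto_stepCount_div_stepCount {l l' : ℝ} (hl : 0 ≤ l) (hl' : 0 < l') :
    Tendsto (fun k => (stepCount l k / stepCount l' k : ℝ)) atTop (𝓝 (l / l')) := by
  refine ((tendsto_stepCount_div_sq hl).div (tendsto_stepCount_div_sq hl'.le) hl'.ne').congr' ?_
  filter_upwards [eventually_gt_atTop 0] with k hk
  exact div_div_div_cancel_right₀ (by positivity) _ _

/-- The bicombing `s` consists of limits along `U` of midpoint chains whose numbers of steps depend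
only on the distance of the endpoints and are asymptotically proportional to it. -/
structure IsChainLimitBicombing {X : Type*} [MetricSpace X] (m : X → X → X) (U : Filter ℕ)
    (s : X → X → ℝ → X) : Prop where
  isChainLimit : ∀ x y, IsChainLimit m U (stepCount (dist x y)) (s x y)
  apply_zero : ∀ x y, s x y 0 = x
  apply_one : ∀ x y, s x y 1 = y

theorem IsConicalMidpoint.exists_isChainLimitBicombing {X : Type*} [MetricSpace X] [ProperSpace X]
    {m : X → X → X} (hm : IsConicalMidpoint m) {U : Ultrafilter ℕ} (hU : (U : Filter ℕ) ≤ atTop) :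
    ∃ s, IsChainLimitBicombing m U s := by
  choose s hs h0 h1 using fun x y : X => hm.exists_isChainLimit
    ((tendsto_stepCount (dist x y)).mono_left hU) (stepCount_ne_zero _) x y
  exact ⟨s, hs, h0, h1⟩

namespace IsChainLimitBicombing

variable {X : Type*} [MetricSpace X] {m : X → X → X} {U : Filter ℕ} [NeBot U] {s : X → X → ℝ → X}

theorem isGeodesicBicombing (hm : IsConicalMidpoint m) (hU : U ≤ atTop)
    (hs : IsChainLimitBicombing m U s) : IsGeodesicBicombing s := by
  refine ⟨hs.apply_zero, hs.apply_one, fun x y t ht t' ht' => ?_⟩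
  simpa only [hs.apply_zero, hs.apply_one] using
    (hs.isChainLimit x y).dist_eq hm ((tendsto_stepCount _).mono_left hU) ht ht'

theorem convexOn_dist_of_dist_eq (hm : IsConicalMidpoint m) (hU : U ≤ atTop)
    (hs : IsChainLimitBicombing m U s) {x y x' y' : X} (h : dist x y = dist x' y') :
    ConvexOn ℝ (Icc (0 : ℝ) 1) fun t => dist (s x y t) (s x' y' t) :=
  (hs.isChainLimit x y).convexOn_dist hm ((tendsto_stepCount _).mono_left hU)
    (h ▸ hs.isChainLimit x' y')

theorem convexOn_dist_left (hm : IsConicalMidpoint m) (hU : U ≤ atTop)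
    (hs : IsChainLimitBicombing m U s) (x y z : X) :
    ConvexOn ℝ (Icc (0 : ℝ) 1) fun t => dist z (s x y t) :=
  (IsChainLimit.const hm U _ z).convexOn_dist hm ((tendsto_stepCount _).mono_left hU)
    (hs.isChainLimit x y)

theorem consistent (hm : IsConicalMidpoint m) (hU : U ≤ atTop)
    (hs : IsChainLimitBicombing m U s) (x y : X) {a b t : ℝ} (ha : a ∈ Icc (0 : ℝ) 1)
    (hb : b ∈ Icc (0 : ℝ) 1) (hab : a ≤ b) (ht : t ∈ Icc (0 : ℝ) 1) :
    s (s x y a) (s x y b) t = s x y ((1 - t) * a + t * b) := by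
  have hdist := (hs.isGeodesicBicombing hm hU).2.2
  have hpq : dist (s x y a) (s x y b) = (b - a) * dist x y := by
    rw [hdist x y a ha b hb, abs_sub_comm, abs_of_nonneg (sub_nonneg.2 hab)]
  rw [show (1 - t) * a + t * b = a + t * (b - a) by ring]
  rcases (mul_nonneg (sub_nonneg.2 hab) (dist_nonneg (x := x) (y := y))).eq_or_lt with h0 | hpos
  · have hleft : s (s x y a) (s x y b) t = s x y a := by
      simpa [hs.apply_zero, hpq, ← h0] using hdist (s x y a) (s x y b) t ht 0 (by simp)
    have hmem : a + t * (b - a) ∈ Icc (0 : ℝ) 1 :=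
      (convex_Icc (0 : ℝ) 1).add_smul_sub_mem ha hb ht
    have hright : dist (s x y (a + t * (b - a))) (s x y a) = 0 := by
      rw [hdist x y _ hmem a ha, add_sub_cancel_left, abs_mul, abs_of_nonneg (sub_nonneg.2 hab),
        mul_assoc, ← h0, mul_zero]
    rw [hleft, dist_eq_zero.1 hright]
  · have hxy : 0 < dist x y := pos_of_mul_pos_right hpos (sub_nonneg.2 hab)
    have hlen := (tendsto_stepCount_div_stepCount hpos.le hxy).mono_left hU
    rw [mul_div_cancel_right₀ _ hxy.ne'] at hlen
    exact (hs.isChainLimit x y).eq_restrict hm ((tendsto_stepCount _).mono_left hU)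
      (hpq ▸ hs.isChainLimit _ _) ha hb.2 (sub_pos.1 (pos_of_mul_pos_left hpos hxy.le)) hlen
      (hs.apply_zero _ _) (hs.apply_one _ _) ht

end IsChainLimitBicombing

theorem proper_conical_bicombing_exists_consistent_general
    {X : Type*} [MetricSpace X] [ProperSpace X]
    {m : X → X → X} (hm : IsConicalMidpoint m) :
    ∃ s : X → X → ℝ → X, IsGeodesicBicombing s ∧
      (∀ x y : X, ∀ a ∈ Icc (0 : ℝ) 1, ∀ b ∈ Icc (0 : ℝ) 1, a ≤ b →
        ∀ lam ∈ Icc (0 : ℝ) 1,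
          s (s x y a) (s x y b) lam = s x y ((1 - lam) * a + lam * b)) ∧
      (∀ x y z : X, ConvexOn ℝ (Icc (0 : ℝ) 1) (fun t => dist z (s x y t))) ∧
      (∀ x y x' y' : X, dist x y = dist x' y' →
        ConvexOn ℝ (Icc (0 : ℝ) 1) (fun t => dist (s x y t) (s x' y' t))) := by
  obtain ⟨s, hs⟩ := hm.exists_isChainLimitBicombing Nat.hyperfilter_le_atTop
  have hU : (hyperfilter ℕ : Filter ℕ) ≤ atTop := Nat.hyperfilter_le_atTop
  exact ⟨s, hs.isGeodesicBicombing hm hU,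
    fun x y a ha b hb hab t ht => hs.consistent hm hU x y ha hb hab ht,
    hs.convexOn_dist_left hm hU, fun _ _ _ _ h => hs.convexOn_dist_of_dist_eq hm hU h⟩

/-- **Descombes–Lang type improvement (Theorem 1.4).** Every proper metric space admitting a
conical geodesic bicombing admits a geodesic bicombing `s` that is (1) consistent,
(2) consists of straight geodesics, and (3) satisfies the convexity condition
for pairs of geodesics of equal length. -/
theorem proper_conical_bicombing_exists_consistent
    {X : Type*} [MetricSpace X] [ProperSpace X]
    (h : ∃ σ : X → X → ℝ → X, IsGeodesicBicombing σ ∧ IsConical σ) :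
    ∃ s : X → X → ℝ → X, IsGeodesicBicombing s ∧
      -- (1) `s` is consistent
      (∀ x y : X, ∀ a ∈ Set.Icc (0:ℝ) 1, ∀ b ∈ Set.Icc (0:ℝ) 1, a ≤ b →
        ∀ lam ∈ Set.Icc (0:ℝ) 1,
          s (s x y a) (s x y b) lam = s x y ((1 - lam) * a + lam * b)) ∧
      -- (2) every geodesic of `s` is straight
      (∀ x y z : X, ConvexOn ℝ (Set.Icc (0:ℝ) 1) (fun t => dist z (s x y t))) ∧
      -- (3) convexity for pairs of geodesics of equal length
      (∀ x y x' y' : X, dist x y = dist x' y' →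
        ConvexOn ℝ (Set.Icc (0:ℝ) 1) (fun t => dist (s x y t) (s x' y' t))) := by
  obtain ⟨σ, hg, hc⟩ := h
  exact proper_conical_bicombing_exists_consistent_general (hc.isConicalMidpoint hg)
end
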